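/- arXiv:2002.00260 — 5 statements merged into one kernel-verified Lean document; each statement's English description precedes it below -/
import Mathlib

section
/- Under Assumptions 1, 2 and 3, suppose in addition there is a constant x̄ ≥ ‖x*‖_v such that ‖x(t)‖_v ≤ x̄ almost surely for all t, and let the step size be α_t = h/(t + t0) with t0 ≥ max(4h, τ) and h ≥ 2/(σ(1−γ)). Then for every T ≥ τ and every δ ∈ (0,1), with probability at least 1 − δ, ‖x(T) − x*‖_v ≤ (12 ε̄/(1−γ)) · √((τ+1)h/σ) · √(log(2(τ+1)T²n/δ)/(T + t0)) + (4/(1−γ)) · max(16 ε̄ h τ/σ, 2x̄(τ + t0)) · 1/(T + t0), where ε̄ = 2x̄ + C + w̄/v̲. -/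
/-!
Write `y_i = (x_i - x*_i) / v_i`. Centring the visit indicator of coordinate `i` by its conditional
probability `d ∈ [σ, 1]` given the past lagged by `τ` turns the scheme, for `t ≥ τ`, into
`y(t+1) = (1 - α d) y(t) + α (d f(t) + e(t) + φ(t))`, where `f` is the contraction term
(`|f| ≤ γ max_j |y_j|`), `e` is a bounded noise with `E[e(t) | ℱ_{t-τ}] = 0`, and `φ`, of order
`1 / (t + t0)`, comes from replacing `x(t)` by `x(t-τ)` inside the centred indicator.

The accumulated noise `z(t+1) = (1 - α d) z(t) + α e(t)` has random, non-adapted weights. Restarting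
at the last sign change of `z` shows that `z(t)` is at most the largest of the sums
`∑_{k₀ ≤ k < t} wt k t * e(k)`, whose weights use the deterministic rate `σ` in place of `d`
(`exists_noiseAcc_le`). The squared weights sum to at most `2 h / (σ (t + t0))` (`sum_wt_sq_le`).
A lagged Azuma–Hoeffding inequality (`lagged_azuma`) controls each sum: the indices are split into
residue classes modulo `τ + 1`, each class is a genuine martingale-difference sequence, and the
exponential moments of the classes are combined by convexity of `exp`. A union bound over
coordinates, `k₀` and `t` gives `exists_bad_event`.

On the good event, an induction (`path_bound`) shows that `y - z` stays below
`√γ (A / √(t + t0) + B / (t + t0)) + M / (t + t0)`: the factor `√γ`, rather than `γ`, leaves room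
for the decrease of the rates, since `σ h (1 - √γ) ≥ 1`. Adding `z` gives the claimed bound.
-/

open MeasureTheory Finset

/-- Weighted infinity norm `‖x‖_v = max_i |x_i| / v_i`. -/
noncomputable def vnorm {n : ℕ} (v x : Fin n → ℝ) : ℝ := ⨆ i, |x i| / v i

/-! ### The weighted norm -/

lemma abs_div_le_vnorm {n : ℕ} (v x : Fin n → ℝ) (i : Fin n) : |x i| / v i ≤ vnorm v x :=
  le_ciSup (f := fun i => |x i| / v i) (Set.finite_range _).bddAbove i

lemma vnorm_le {n : ℕ} (hn : 0 < n) {v x : Fin n → ℝ} {a : ℝ} (h : ∀ i, |x i| / v i ≤ a) :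
    vnorm v x ≤ a := by
  have : Nonempty (Fin n) := ⟨⟨0, hn⟩⟩
  exact ciSup_le h

/-! ### The linear noise recursion -/

/-- Weight at time `t` of the noise injected at time `k`, in the linear recursion
`z ↦ (1 - α l * sg) z + α l * e l`. -/
noncomputable def wt (α : ℕ → ℝ) (sg : ℝ) (k t : ℕ) : ℝ :=
  α k * ∏ l ∈ Ico (k + 1) t, (1 - α l * sg)

lemma wt_self (α : ℕ → ℝ) (sg : ℝ) (t : ℕ) : wt α sg t (t + 1) = α t := by simp [wt]

lemma wt_succ (α : ℕ → ℝ) (sg : ℝ) {k t : ℕ} (h : k < t) :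
    wt α sg k (t + 1) = (1 - α t * sg) * wt α sg k t := by
  unfold wt
  rw [prod_Ico_succ_top (by omega)]
  ring

/-- The recursion `z ↦ (1 - α d) z + α e`, started from `0` at time `τ`, and equal to `0` before. -/
noncomputable def noiseAcc (α d e : ℕ → ℝ) (τ : ℕ) : ℕ → ℝ
  | 0 => 0
  | t + 1 => if t < τ then 0 else (1 - α t * d t) * noiseAcc α d e τ t + α t * e t

lemma noiseAcc_start (α d e : ℕ → ℝ) (τ : ℕ) : noiseAcc α d e τ τ = 0 := by
  cases τ <;> simp [noiseAcc]

lemma noiseAcc_succ (α d e : ℕ → ℝ) {τ t : ℕ} (h : τ ≤ t) :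
    noiseAcc α d e τ (t + 1) = (1 - α t * d t) * noiseAcc α d e τ t + α t * e t := by
  simp [noiseAcc, not_lt.mpr h]

lemma noiseAcc_neg (α d e : ℕ → ℝ) (τ t : ℕ) :
    noiseAcc α d (fun k => -e k) τ t = -noiseAcc α d e τ t := by
  induction t with
  | zero => simp [noiseAcc]
  | succ t ih =>
    simp only [noiseAcc]
    split_ifs
    · simp
    · rw [ih]; ring

/-- The accumulated noise with the varying rate `d` is dominated by a partial sum with the constant
rate `sg`: while `z ≥ 0` a smaller rate only increases it, and when `z ≤ 0` the sum can be restarted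
from scratch, so `k₀` is the last time at which `z` is nonpositive. -/
lemma exists_noiseAcc_le (α d e : ℕ → ℝ) (sg : ℝ) (τ : ℕ) (hα : ∀ t, 0 < α t ∧ α t ≤ 1)
    (hsg : 0 < sg) (hd : ∀ t, τ ≤ t → sg ≤ d t ∧ d t ≤ 1) (t : ℕ) (ht : τ ≤ t) :
    ∃ k₀, τ ≤ k₀ ∧ k₀ ≤ t ∧ noiseAcc α d e τ t ≤ ∑ k ∈ Ico k₀ t, wt α sg k t * e k := by
  induction t, ht using Nat.le_induction with
  | base => exact ⟨τ, le_rfl, le_rfl, by simp [noiseAcc_start]⟩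
  | succ t ht ih =>
    obtain ⟨k₀, h1, h2, h3⟩ := ih
    obtain ⟨ha, ha'⟩ := hα t
    obtain ⟨hd1, hd2⟩ := hd t ht
    rw [noiseAcc_succ α d e ht]
    rcases le_total (noiseAcc α d e τ t) 0 with hz | hz
    · refine ⟨t, ht, by omega, ?_⟩
      rw [Nat.Ico_succ_singleton, sum_singleton, wt_self]
      nlinarith [mul_nonneg (by nlinarith : (0:ℝ) ≤ 1 - α t * d t) (neg_nonneg.mpr hz)]
    · refine ⟨k₀, h1, by omega, ?_⟩
      rw [sum_Ico_succ_top h2, wt_self]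
      have : ∑ k ∈ Ico k₀ t, wt α sg k (t + 1) * e k
          = (1 - α t * sg) * ∑ k ∈ Ico k₀ t, wt α sg k t * e k := by
        rw [mul_sum]
        refine sum_congr rfl fun k hk => ?_
        rw [wt_succ α sg (mem_Ico.mp hk).2]; ring
      rw [this]
      have h4 : (1 - α t * d t) * noiseAcc α d e τ t ≤ (1 - α t * sg) * noiseAcc α d e τ t := by
        apply mul_le_mul_of_nonneg_right _ hz
        nlinarith
      have h5 : (1 - α t * sg) * noiseAcc α d e τ t
          ≤ (1 - α t * sg) * ∑ k ∈ Ico k₀ t, wt α sg k t * e k :=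
        mul_le_mul_of_nonneg_left h3 (by nlinarith)
      linarith

/-- Induction on `t`: with `m = t + t0`, the bound `K / m` with `K = 2 h / sg` is preserved because
`sg * h ≥ 2` gives `(sg * h - 1) * K ≥ h ^ 2`. -/
lemma sum_wt_sq_le (α : ℕ → ℝ) (sg h t0 : ℝ) (hα : ∀ t, 0 < α t ∧ α t ≤ 1)
    (hsg : 0 < sg) (hsg1 : sg < 1) (hh : 2 ≤ sg * h) (ht0 : 0 < t0)
    (hstep : ∀ t : ℕ, α t = h / ((t : ℝ) + t0)) (k₀ t : ℕ) (ht : k₀ ≤ t) :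
    ∑ k ∈ Ico k₀ t, wt α sg k t ^ 2 ≤ 2 * h / sg / ((t : ℝ) + t0) := by
  have hh0 : 0 < h := by
    by_contra hc
    nlinarith
  induction t, ht using Nat.le_induction with
  | base => simp; positivity
  | succ t ht ih =>
    rw [sum_Ico_succ_top ht, wt_self]
    have : ∑ k ∈ Ico k₀ t, wt α sg k (t + 1) ^ 2
        = (1 - α t * sg) ^ 2 * ∑ k ∈ Ico k₀ t, wt α sg k t ^ 2 := by
      rw [mul_sum]
      refine sum_congr rfl fun k hk => ?_
      rw [wt_succ α sg (mem_Ico.mp hk).2]; ring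
    rw [this]
    obtain ⟨ha, ha'⟩ := hα t
    set m : ℝ := (t : ℝ) + t0 with hm
    have hmpos : 0 < m := by positivity
    have e1 : ((t + 1 : ℕ) : ℝ) + t0 = m + 1 := by push_cast; ring
    rw [e1]
    have h1 : (1 - α t * sg) ^ 2 ≤ 1 - α t * sg := by
      have : 0 < α t * sg := mul_pos ha hsg
      have : α t * sg ≤ 1 := by nlinarith
      nlinarith
    have h0 : 0 ≤ 1 - α t * sg := by nlinarith
    have h2 : (1 - α t * sg) ^ 2 * ∑ k ∈ Ico k₀ t, wt α sg k t ^ 2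
        ≤ (1 - α t * sg) * (2 * h / sg / m) :=
      mul_le_mul h1 ih (sum_nonneg fun _ _ => sq_nonneg _) h0
    refine (add_le_add_left h2 _).trans ?_
    rw [hstep t, ← hm]
    have e2 : (1 - h / m * sg) * (2 * h / sg / m) + (h / m) ^ 2
        = (2 * h / sg) * ((m - sg * h + sg * h / 2) / m ^ 2) := by
      field_simp
    rw [e2, div_eq_mul_inv (2 * h / sg) (m + 1)]
    refine mul_le_mul_of_nonneg_left ?_ (by positivity)
    rw [← one_div, div_le_div_iff₀ (by positivity) (by positivity)]
    nlinarith

/-! ### Deterministic error recursion -/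

lemma decay_le {m : ℝ} (hm : 0 < m) : 1 - 1 / m ≤ m / (m + 1) := by
  rw [one_sub_div hm.ne', div_le_div_iff₀ hm (by positivity)]
  nlinarith

/-- Both `1 / √m` and `1 / m` shrink by at most the factor `m / (m + 1)` from `m` to `m + 1`. -/
lemma rate_step {A B m : ℝ} (hA0 : 0 ≤ A) (hm : 0 < m) :
    m / (m + 1) * (A / Real.sqrt m + B / m) ≤ A / Real.sqrt (m + 1) + B / (m + 1) := by
  rw [mul_add]
  refine add_le_add ?_ (le_of_eq (by field_simp))
  have hsq : Real.sqrt m ≤ Real.sqrt (m + 1) := Real.sqrt_le_sqrt (by linarith)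
  have hsm : 0 < Real.sqrt m := Real.sqrt_pos.mpr hm
  have hsm1 : 0 < Real.sqrt (m + 1) := Real.sqrt_pos.mpr (by linarith)
  have q1 : Real.sqrt m ^ 2 = m := Real.sq_sqrt hm.le
  have q2 : Real.sqrt (m + 1) ^ 2 = m + 1 := Real.sq_sqrt (by linarith)
  have : m / (m + 1) * (A / Real.sqrt m)
      = (Real.sqrt m / Real.sqrt (m + 1)) * (A / Real.sqrt (m + 1)) := by
    calc m / (m + 1) * (A / Real.sqrt m)
        = Real.sqrt m ^ 2 / Real.sqrt (m + 1) ^ 2 * (A / Real.sqrt m) := by rw [q1, q2]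
      _ = _ := by field_simp
  rw [this]
  exact mul_le_of_le_one_left (by positivity) ((div_le_one hsm1).mpr hsq)

/-- One induction step for the noise-free part of the error. Its envelope is
`s * (A / √m + B / m) + M / m` with `s = √γ`; the contraction pays `γ = s * s`, and the surplus
`1 - s` absorbs the decrease of the rates, while `M / m` absorbs the lag term `Φ / m`. -/
lemma step_ineq {s sg h A B M Φ m p : ℝ} (hs0 : 0 < s) (hs1 : s < 1)
    (hsh1 : 1 ≤ sg * h * (1 - s)) (hsh2 : 2 ≤ sg * h) (hA0 : 0 ≤ A) (hB0 : 0 ≤ B) (hM0 : 0 ≤ M)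
    (hh0 : 0 < h) (hMΦ : 2 * Φ ≤ sg * M) (hm : 0 < m) (hp : sg * h / m ≤ p) :
    (1 - p) * (s * (A / Real.sqrt m + B / m) + M / m)
      + p * (s * s * (A / Real.sqrt m + B / m)) + h / m * (Φ / m)
    ≤ s * (A / Real.sqrt (m + 1) + B / (m + 1)) + M / (m + 1) := by
  have c1 := rate_step (B := B) hA0 hm
  set G : ℝ := A / Real.sqrt m + B / m with hG
  have hG0 : 0 ≤ G := by positivity
  have hm1 := decay_le hm
  have hps : 1 / m ≤ p * (1 - s) := by
    calc 1 / m ≤ sg * h * (1 - s) / m := by gcongr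
      _ = sg * h / m * (1 - s) := by ring
      _ ≤ _ := mul_le_mul_of_nonneg_right hp (by linarith)
  have c2 : (1 - p) * (s * G) + p * (s * s * G)
      ≤ s * (A / Real.sqrt (m + 1) + B / (m + 1)) := by
    have : (1 - p) * (s * G) + p * (s * s * G) = s * ((1 - p * (1 - s)) * G) := by ring
    rw [this]
    refine mul_le_mul_of_nonneg_left (le_trans ?_ c1) hs0.le
    exact mul_le_mul_of_nonneg_right (by linarith) hG0
  have c3 : (1 - p) * (M / m) + h / m * (Φ / m) ≤ M / (m + 1) := by
    have r1 : (1 - p) * (M / m) ≤ (1 - sg * h / m) * (M / m) :=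
      mul_le_mul_of_nonneg_right (by linarith) (by positivity)
    have r2 : (1 - sg * h / m) * (M / m) + h / m * (Φ / m)
        = ((m - sg * h) * M + h * Φ) / m ^ 2 := by
      field_simp
    have r3 : ((m - sg * h) * M + h * Φ) / m ^ 2 ≤ (m - 1) * M / m ^ 2 := by
      apply div_le_div_of_nonneg_right _ (by positivity)
      have := mul_le_mul_of_nonneg_left hMΦ hh0.le
      have := mul_le_mul_of_nonneg_right hsh2 hM0
      linarith
    have r4 : (m - 1) * M / m ^ 2 ≤ M / (m + 1) := by
      rw [div_le_div_iff₀ (by positivity) (by positivity)]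
      nlinarith
    linarith
  linarith

/-- Pathwise form of the error bound: if the accumulated noise is at most `Cε / √(t + t0)` up to
time `T` and the lag term `φ` is at most `Φ / (t + t0)`, the contraction propagates the rate
`A / √(t + t0) + B / (t + t0)`. -/
lemma path_bound {n : ℕ} (y f e φ d : ℕ → Fin n → ℝ) (α : ℕ → ℝ) (τ T : ℕ)
    (γ sg h t0 A B M Φ Cε : ℝ) (hγ0 : 0 < γ) (hγ1 : γ < 1)
    (hα : ∀ t, 0 < α t ∧ α t ≤ 1) (hsg : 0 < sg) (hh : 2 ≤ sg * h * (1 - γ)) (ht0 : 0 < t0)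
    (hstep : ∀ t : ℕ, α t = h / ((t : ℝ) + t0))
    (hd : ∀ t, τ ≤ t → ∀ i, sg ≤ d t i ∧ d t i ≤ 1)
    (hA0 : 0 ≤ A) (hB0 : 0 ≤ B) (hM0 : 0 ≤ M)
    (hA : A * (1 - γ) = 2 * Cε) (hB : B * (1 - γ) = 4 * M) (hMΦ : 2 * Φ ≤ sg * M)
    (hy : ∀ t, τ ≤ t → ∀ i, y (t + 1) i
      = (1 - α t * d t i) * y t i + α t * (d t i * f t i + e t i + φ t i))
    (hf : ∀ t i a, (∀ j, |y t j| ≤ a) → |f t i| ≤ γ * a)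
    (hφ : ∀ t, τ ≤ t → ∀ i, |φ t i| ≤ Φ / ((t : ℝ) + t0))
    (hz : ∀ t, τ ≤ t → t ≤ T → ∀ i,
      |noiseAcc α (fun k => d k i) (fun k => e k i) τ t| ≤ Cε / Real.sqrt ((t : ℝ) + t0))
    (h0 : ∀ i, |y τ i| ≤ M / ((τ : ℝ) + t0)) (hT : τ ≤ T) (i : Fin n) :
    |y T i| ≤ A / Real.sqrt ((T : ℝ) + t0) + B / ((T : ℝ) + t0) := by
  obtain ⟨s, hs0, hs1, hss⟩ : ∃ s : ℝ, 0 < s ∧ s < 1 ∧ s * s = γ :=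
    ⟨Real.sqrt γ, Real.sqrt_pos.mpr hγ0, by
      rw [Real.sqrt_lt' one_pos]; simpa using hγ1, Real.mul_self_sqrt hγ0.le⟩
  have hs2 : 1 - γ ≤ 2 * (1 - s) := by nlinarith
  have hsh : 0 < sg * h := by
    by_contra hc
    nlinarith
  have hh0 : 0 < h := by
    by_contra hc
    nlinarith
  have hsh1 : 1 ≤ sg * h * (1 - s) := by nlinarith
  have hsh2 : 2 ≤ sg * h := by nlinarith
  set z : ℕ → Fin n → ℝ :=
    fun t i => noiseAcc α (fun k => d k i) (fun k => e k i) τ t with hzdef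
  have total : ∀ t, τ ≤ t → t ≤ T →
      (∀ i, |y t i - z t i| ≤ s * (A / Real.sqrt ((t : ℝ) + t0) + B / ((t : ℝ) + t0))
        + M / ((t : ℝ) + t0)) →
      ∀ i, |y t i| ≤ A / Real.sqrt ((t : ℝ) + t0) + B / ((t : ℝ) + t0) := by
    intro t h1 h2 hr i
    have hm : 0 < (t : ℝ) + t0 := by positivity
    have h3 : |y t i| ≤ |y t i - z t i| + |z t i| := by
      simpa using abs_add_le (y t i - z t i) (z t i)
    have h4 := hr i
    have h5 := hz t h1 h2 i
    have hq : (0:ℝ) ≤ (Real.sqrt ((t : ℝ) + t0))⁻¹ := by positivity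
    have hq' : (0:ℝ) ≤ ((t : ℝ) + t0)⁻¹ := by positivity
    simp only [div_eq_mul_inv] at *
    have h6 : 0 ≤ (A * (1 - s) - Cε) * (Real.sqrt ((t : ℝ) + t0))⁻¹ :=
      mul_nonneg (by nlinarith) hq
    have h7 : 0 ≤ (B * (1 - s) - M) * ((t : ℝ) + t0)⁻¹ :=
      mul_nonneg (by nlinarith) hq'
    nlinarith
  have key : ∀ t, τ ≤ t → t ≤ T →
      ∀ i, |y t i - z t i| ≤ s * (A / Real.sqrt ((t : ℝ) + t0) + B / ((t : ℝ) + t0))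
        + M / ((t : ℝ) + t0) := by
    intro t ht
    induction t, ht using Nat.le_induction with
    | base =>
      intro _ i
      have : z τ i = 0 := noiseAcc_start _ _ _ _
      rw [this, sub_zero]
      have : 0 ≤ s * (A / Real.sqrt ((τ : ℝ) + t0) + B / ((τ : ℝ) + t0)) := by positivity
      linarith [h0 i]
    | succ t ht ih =>
      intro htT i
      have ih := ih (by omega)
      have htot := total t ht (by omega) ih
      have hfi := hf t i _ htot
      have hφi := hφ t ht i
      have hri := ih i
      obtain ⟨ha, ha'⟩ := hα t
      obtain ⟨hd1, hd2⟩ := hd t ht i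
      have hrec : y (t + 1) i - z (t + 1) i = (1 - α t * d t i) * (y t i - z t i)
          + α t * d t i * f t i + α t * φ t i := by
        have : z (t + 1) i = (1 - α t * d t i) * z t i + α t * e t i :=
          noiseAcc_succ _ _ _ ht
        rw [this, hy t ht i]; ring
      have had : 0 ≤ 1 - α t * d t i := by nlinarith
      have had0 : 0 ≤ α t * d t i := mul_nonneg ha.le (by linarith)
      have habs : |y (t + 1) i - z (t + 1) i| ≤ (1 - α t * d t i) * |y t i - z t i|
          + α t * d t i * |f t i| + α t * |φ t i| := by
        rw [hrec]
        refine (abs_add_three _ _ _).trans ?_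
        rw [abs_mul _ (y t i - z t i), abs_mul _ (f t i), abs_mul _ (φ t i), abs_of_nonneg had,
          abs_of_nonneg had0, abs_of_pos ha]
      refine habs.trans ?_
      set m : ℝ := (t : ℝ) + t0 with hm
      have hmpos : 0 < m := by positivity
      have e1 : ((t + 1 : ℕ) : ℝ) + t0 = m + 1 := by push_cast; ring
      rw [e1]
      have had' : sg * h / m ≤ α t * d t i := by
        rw [hstep t, ← hm, div_mul_eq_mul_div]
        apply div_le_div_of_nonneg_right _ hmpos.le
        rw [mul_comm]
        exact mul_le_mul_of_nonneg_left hd1 hh0.le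
      have hb := step_ineq hs0 hs1 hsh1 hsh2 hA0 hB0 hM0 hh0 hMΦ hmpos had'
      have b1 := mul_le_mul_of_nonneg_left hri had
      have b2 := mul_le_mul_of_nonneg_left hfi had0
      have b3 := mul_le_mul_of_nonneg_left hφi ha.le
      rw [← hss] at b2
      rw [hstep t, ← hm] at b3
      rw [hstep t, ← hm] at b1 b2 hb ⊢
      linarith
  exact total T hT le_rfl (key T hT le_rfl) i

/-! ### Azuma–Hoeffding with a lag -/

lemma integrable_of_ae_abs_le {Ω : Type*} {m0 : MeasurableSpace Ω} {μ : Measure Ω}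
    [IsProbabilityMeasure μ] {f : Ω → ℝ} (hf : AEStronglyMeasurable f μ) {K : ℝ}
    (hK : ∀ᵐ ω ∂μ, |f ω| ≤ K) : Integrable f μ :=
  Integrable.of_bound hf K hK

lemma integral_mul_eq_zero {Ω : Type*} {m m0 : MeasurableSpace Ω} {μ : Measure Ω}
    [IsProbabilityMeasure μ] (hm : m ≤ m0) {Z Y : Ω → ℝ} (hZ : StronglyMeasurable[m] Z)
    (hY : Integrable Y μ) (hZY : Integrable (Z * Y) μ) (h0 : μ[Y | m] =ᵐ[μ] 0) :
    ∫ ω, Z ω * Y ω ∂μ = 0 := by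
  have h1 : μ[Z * Y | m] =ᵐ[μ] 0 := by
    filter_upwards [condExp_mul_of_stronglyMeasurable_left hZ hZY hY, h0] with ω h2 h3
    simp [h2, h3]
  have h2 : ∫ ω, (μ[Z * Y | m]) ω ∂μ = ∫ ω, (Z * Y) ω ∂μ := integral_condExp hm
  rw [integral_congr_ae h1] at h2
  simpa using h2.symm

/-- Conditional Hoeffding lemma, tested against a nonnegative `m`-measurable weight `Z`. -/
lemma integral_mul_exp_le {Ω : Type*} {m m0 : MeasurableSpace Ω} {μ : Measure Ω}
    [IsProbabilityMeasure μ] (hm : m ≤ m0) {Z Y : Ω → ℝ} (hZ : StronglyMeasurable[m] Z)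
    (hZ0 : ∀ ω, 0 ≤ Z ω) {K : ℝ} (hZK : ∀ᵐ ω ∂μ, Z ω ≤ K)
    (hY : StronglyMeasurable Y) {c : ℝ} (hYc : ∀ᵐ ω ∂μ, |Y ω| ≤ c)
    (h0 : μ[Y | m] =ᵐ[μ] 0) (l : ℝ) :
    ∫ ω, Z ω * Real.exp (l * Y ω - l ^ 2 * c ^ 2 / 2) ∂μ ≤ ∫ ω, Z ω ∂μ := by
  have hZabs : ∀ᵐ ω ∂μ, |Z ω| ≤ K := by
    filter_upwards [hZK] with ω h
    rwa [abs_of_nonneg (hZ0 ω)]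
  have hZm : StronglyMeasurable Z := hZ.mono hm
  have iZ : Integrable Z μ := integrable_of_ae_abs_le hZm.aestronglyMeasurable hZabs
  have iY : Integrable Y μ := integrable_of_ae_abs_le hY.aestronglyMeasurable hYc
  have iZY : Integrable (Z * Y) μ := by
    refine integrable_of_ae_abs_le (K := K * c) (hZm.mul hY).aestronglyMeasurable ?_
    filter_upwards [hZabs, hYc] with ω h1 h2
    rw [Pi.mul_apply, abs_mul]
    exact mul_le_mul h1 h2 (abs_nonneg _) ((abs_nonneg _).trans h1)
  have hz := integral_mul_eq_zero hm hZ iY iZY h0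
  set D : ℝ := Real.exp (-(l ^ 2 * c ^ 2 / 2)) with hD
  -- chord bound for `exp` on `[-c, c]`; for `c = 0` the slope is the junk value `0`, and `Y = 0`
  have hpt : ∀ᵐ ω ∂μ, Z ω * Real.exp (l * Y ω - l ^ 2 * c ^ 2 / 2)
      ≤ Z ω + (D * (Real.sinh (l * c) / c)) * (Z ω * Y ω) := by
    filter_upwards [hYc] with ω hc
    have hch : Real.exp (l * Y ω) ≤ Real.cosh (l * c) + Real.sinh (l * c) / c * Y ω := by
      rcases ((abs_nonneg _).trans hc).eq_or_lt with hc0 | hc0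
      · have : Y ω = 0 := by
          rw [← hc0] at hc
          exact abs_nonpos_iff.mp hc
        simp [this, Real.one_le_cosh]
      · have h1 : |Y ω / c| ≤ 1 := by
          rw [abs_div, abs_of_pos hc0]
          exact (div_le_one hc0).mpr hc
        have h2 := Real.exp_mul_le_cosh_add_mul_sinh h1 (l * c)
        have e1 : Y ω / c * (l * c) = l * Y ω := by field_simp
        rw [e1] at h2
        calc _ ≤ _ := h2
          _ = _ := by ring
    have hcosh : D * Real.cosh (l * c) ≤ 1 := by
      have := Real.cosh_le_exp_half_sq (l * c)
      calc D * Real.cosh (l * c) ≤ D * Real.exp ((l * c) ^ 2 / 2) :=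
            mul_le_mul_of_nonneg_left this (Real.exp_pos _).le
        _ = 1 := by
            rw [hD, ← Real.exp_add]
            simp only [mul_pow]
            simp
    have e2 : Real.exp (l * Y ω - l ^ 2 * c ^ 2 / 2) = D * Real.exp (l * Y ω) := by
      rw [hD, ← Real.exp_add]; ring_nf
    rw [e2]
    have h3 : D * Real.exp (l * Y ω) ≤ 1 + D * (Real.sinh (l * c) / c * Y ω) := by
      have := mul_le_mul_of_nonneg_left hch (Real.exp_pos (-(l ^ 2 * c ^ 2 / 2))).le
      rw [← hD] at this
      linarith
    have := mul_le_mul_of_nonneg_left h3 (hZ0 ω)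
    linarith
  have iR : Integrable (fun ω => Z ω + (D * (Real.sinh (l * c) / c)) * (Z ω * Y ω)) μ :=
    iZ.add (iZY.const_mul _)
  calc ∫ ω, Z ω * Real.exp (l * Y ω - l ^ 2 * c ^ 2 / 2) ∂μ
      ≤ ∫ ω, (Z ω + (D * (Real.sinh (l * c) / c)) * (Z ω * Y ω)) ∂μ := by
        refine integral_mono_of_nonneg (ae_of_all _ fun ω => ?_) iR hpt
        exact mul_nonneg (hZ0 ω) (Real.exp_pos _).le
    _ = ∫ ω, Z ω ∂μ := by
        have := integral_add iZ (iZY.const_mul (D * (Real.sinh (l * c) / c)))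
        simp only [Pi.mul_apply] at this
        rw [this, integral_const_mul, hz]; simp

/-- Exponential supermartingale bound along one residue class modulo `τ + 1`. -/
lemma integral_exp_class_le {Ω : Type*} {m0 : MeasurableSpace Ω} {μ : Measure Ω}
    [IsProbabilityMeasure μ] (ℱ : Filtration ℕ m0) (τ : ℕ) (Y : ℕ → Ω → ℝ) (c : ℕ → ℝ)
    (hY : ∀ k, τ ≤ k → StronglyMeasurable[ℱ (k + 1)] (Y k))
    (hYc : ∀ k, τ ≤ k → ∀ᵐ ω ∂μ, |Y k ω| ≤ c k)
    (h0 : ∀ k, τ ≤ k → μ[Y k | ℱ (k - τ)] =ᵐ[μ] 0)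
    (l : ℝ) (r k₀ t : ℕ) (hk₀ : τ ≤ k₀) (ht : k₀ ≤ t) :
    Integrable (fun ω => Real.exp (∑ k ∈ (Ico k₀ t).filter (fun k => k % (τ + 1) = r),
        (l * Y k ω - l ^ 2 * c k ^ 2 / 2))) μ ∧
    ∫ ω, Real.exp (∑ k ∈ (Ico k₀ t).filter (fun k => k % (τ + 1) = r),
        (l * Y k ω - l ^ 2 * c k ^ 2 / 2)) ∂μ ≤ 1 := by
  have hbd : ∀ t, ∀ᵐ ω ∂μ, Real.exp (∑ k ∈ (Ico k₀ t).filter (fun k => k % (τ + 1) = r),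
        (l * Y k ω - l ^ 2 * c k ^ 2 / 2))
      ≤ Real.exp (∑ k ∈ (Ico k₀ t).filter (fun k => k % (τ + 1) = r), |l| * c k) := by
    intro t
    have hall : ∀ᵐ ω ∂μ, ∀ k, τ ≤ k → |Y k ω| ≤ c k := by
      rw [ae_all_iff]; intro k
      rw [Filter.eventually_imp_distrib_left]
      exact hYc k
    filter_upwards [hall] with ω hω
    refine Real.exp_le_exp.mpr (sum_le_sum fun k hk => ?_)
    have hk' := (mem_Ico.mp (mem_filter.mp hk).1).1
    have h1 := hω k (by omega)
    have h2 : l * Y k ω ≤ |l| * c k :=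
      (le_abs_self _).trans (by
        rw [abs_mul]; exact mul_le_mul_of_nonneg_left h1 (abs_nonneg _))
    have : 0 ≤ l ^ 2 * c k ^ 2 / 2 := by positivity
    linarith
  have hmeas : ∀ (m : MeasurableSpace Ω) (t : ℕ),
      (∀ k ∈ (Ico k₀ t).filter (fun k => k % (τ + 1) = r), StronglyMeasurable[m] (Y k)) →
      StronglyMeasurable[m] (fun ω => Real.exp
        (∑ k ∈ (Ico k₀ t).filter (fun k => k % (τ + 1) = r),
          (l * Y k ω - l ^ 2 * c k ^ 2 / 2))) := by
    intro m t hk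
    refine Real.continuous_exp.comp_stronglyMeasurable ?_
    refine Finset.stronglyMeasurable_fun_sum _ fun k hk' => ?_
    exact ((hk k hk').const_mul l).sub stronglyMeasurable_const
  refine ⟨?_, ?_⟩
  · refine integrable_of_ae_abs_le (hmeas m0 t ?_).aestronglyMeasurable
      (by simpa only [Real.abs_exp] using hbd t)
    intro k hk
    have hk' := (mem_Ico.mp (mem_filter.mp hk).1).1
    exact (hY k (by omega)).mono (ℱ.le _)
  · induction t, ht using Nat.le_induction with
    | base => simp
    | succ t ht ih =>
      rw [← insert_Ico_right_eq_Ico_add_one ht, filter_insert]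
      split_ifs with hr
      · have hτ : τ ≤ t := hk₀.trans ht
        refine le_trans ?_ ih
        have e : ∀ ω, Real.exp (∑ k ∈ insert t ((Ico k₀ t).filter (fun k => k % (τ + 1) = r)),
              (l * Y k ω - l ^ 2 * c k ^ 2 / 2))
            = Real.exp (∑ k ∈ (Ico k₀ t).filter (fun k => k % (τ + 1) = r),
              (l * Y k ω - l ^ 2 * c k ^ 2 / 2)) * Real.exp (l * Y t ω - l ^ 2 * c t ^ 2 / 2) := by
          intro ω
          rw [sum_insert (by simp), ← Real.exp_add, add_comm]
        simp only [e]
        refine integral_mul_exp_le (ℱ.le (t - τ)) (hmeas _ t ?_) (fun ω => (Real.exp_pos _).le)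
          (hbd t) ((hY t hτ).mono (ℱ.le _)) (hYc t hτ) (h0 t hτ) l
        -- an earlier index in the class of `t` is at most `t - (τ + 1)`
        intro k hk
        obtain ⟨hk1, hk2⟩ := mem_filter.mp hk
        obtain ⟨hk3, hk4⟩ := mem_Ico.mp hk1
        refine (hY k (by omega)).mono (ℱ.mono ?_)
        have hdvd : (τ + 1) ∣ t - k := (Nat.modEq_iff_dvd' hk4.le).mp (hk2.trans hr.symm)
        have := Nat.le_of_dvd (by omega) hdvd
        omega
      · exact ih

/-- Azuma–Hoeffding for a sequence that is centred given the past lagged by `τ`. The lag costs a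
factor `τ + 1` in the variance proxy. -/
lemma lagged_azuma {Ω : Type*} {m0 : MeasurableSpace Ω} {μ : Measure Ω}
    [IsProbabilityMeasure μ] (ℱ : Filtration ℕ m0) (τ : ℕ) (Y : ℕ → Ω → ℝ) (c : ℕ → ℝ)
    (hY : ∀ k, τ ≤ k → StronglyMeasurable[ℱ (k + 1)] (Y k))
    (hYc : ∀ k, τ ≤ k → ∀ᵐ ω ∂μ, |Y k ω| ≤ c k)
    (h0 : ∀ k, τ ≤ k → μ[Y k | ℱ (k - τ)] =ᵐ[μ] 0)
    (k₀ t : ℕ) (hk₀ : τ ≤ k₀) (ht : k₀ ≤ t) (V : ℝ) (hV : 0 < V) (s : ℝ) (hs : 0 ≤ s)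
    (hcV : ∑ k ∈ Ico k₀ t, c k ^ 2 ≤ V) :
    μ {ω | s ≤ ∑ k ∈ Ico k₀ t, Y k ω}
      ≤ ENNReal.ofReal (Real.exp (-(s ^ 2 / (2 * (τ + 1) * V)))) := by
  set q : ℝ := (τ : ℝ) + 1 with hq
  have hq0 : 0 < q := by positivity
  set l : ℝ := s / (q * V) with hl
  have hl0 : 0 ≤ l := by positivity
  set g : ℕ → Ω → ℝ := fun r ω => ∑ k ∈ (Ico k₀ t).filter (fun k => k % (τ + 1) = r),
        ((q * l) * Y k ω - (q * l) ^ 2 * c k ^ 2 / 2) with hg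
  have hcl := fun r => integral_exp_class_le ℱ τ Y c hY hYc h0 (q * l) r k₀ t hk₀ ht
  set W : Ω → ℝ := fun ω => ∑ r ∈ range (τ + 1), q⁻¹ * Real.exp (g r ω) with hW
  have iW : Integrable W μ := integrable_finsetSum _ fun r _ => (hcl r).1.const_mul _
  have hW1 : ∫ ω, W ω ∂μ ≤ 1 := by
    rw [hW, integral_finsetSum _ fun r _ => (hcl r).1.const_mul _]
    calc _ ≤ ∑ r ∈ range (τ + 1), q⁻¹ := by
          refine sum_le_sum fun r _ => ?_
          rw [integral_const_mul]
          exact mul_le_of_le_one_right (by positivity) (hcl r).2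
      _ = 1 := by
          rw [sum_const, card_range, nsmul_eq_mul]; push_cast
          rw [← hq]; exact mul_inv_cancel₀ hq0.ne'
  have hexpW : ∀ ω, s ≤ ∑ k ∈ Ico k₀ t, Y k ω → Real.exp (s ^ 2 / (2 * q * V)) ≤ W ω := by
    intro ω hω
    have hconv : Real.exp (∑ r ∈ range (τ + 1), q⁻¹ • g r ω) ≤
        ∑ r ∈ range (τ + 1), q⁻¹ • Real.exp (g r ω) := by
      refine convexOn_exp.map_sum_le (fun _ _ => by positivity) ?_ (fun _ _ => Set.mem_univ _)
      rw [sum_const, card_range, nsmul_eq_mul]; push_cast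
      rw [← hq]; exact mul_inv_cancel₀ hq0.ne'
    simp only [smul_eq_mul] at hconv
    refine le_trans (Real.exp_le_exp.mpr ?_) hconv
    rw [← mul_sum]
    have hfib : ∑ r ∈ range (τ + 1), g r ω
        = ∑ k ∈ Ico k₀ t, ((q * l) * Y k ω - (q * l) ^ 2 * c k ^ 2 / 2) :=
      sum_fiberwise_of_maps_to (fun k _ => mem_range.mpr (Nat.mod_lt _ (by omega))) _
    rw [hfib, sum_sub_distrib, ← mul_sum, ← sum_div, ← mul_sum]
    have h1 : (q * l) * s ≤ (q * l) * ∑ k ∈ Ico k₀ t, Y k ω :=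
      mul_le_mul_of_nonneg_left hω (by positivity)
    have h2 : (q * l) ^ 2 * ∑ k ∈ Ico k₀ t, c k ^ 2 ≤ (q * l) ^ 2 * V :=
      mul_le_mul_of_nonneg_left hcV (by positivity)
    calc s ^ 2 / (2 * q * V) = q⁻¹ * ((q * l) * s - (q * l) ^ 2 * V / 2) := by
          rw [hl]; field_simp; ring
      _ ≤ _ := by
          refine mul_le_mul_of_nonneg_left ?_ (by positivity)
          linarith
  have hmk := mul_meas_ge_le_integral_of_nonneg
    (ae_of_all μ fun ω => sum_nonneg fun r _ => by positivity : 0 ≤ᵐ[μ] W) iW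
    (Real.exp (s ^ 2 / (2 * q * V)))
  have hle : μ.real {ω | Real.exp (s ^ 2 / (2 * q * V)) ≤ W ω}
      ≤ Real.exp (-(s ^ 2 / (2 * q * V))) := by
    rw [Real.exp_neg, ← one_div, le_div_iff₀ (Real.exp_pos _), mul_comm]
    exact hmk.trans hW1
  calc μ {ω | s ≤ ∑ k ∈ Ico k₀ t, Y k ω}
      ≤ μ {ω | Real.exp (s ^ 2 / (2 * q * V)) ≤ W ω} := measure_mono fun ω hω => hexpW ω hω
    _ = ENNReal.ofReal (μ.real {ω | Real.exp (s ^ 2 / (2 * q * V)) ≤ W ω}) := by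
        rw [ofReal_measureReal]
    _ ≤ _ := ENNReal.ofReal_le_ofReal hle

lemma lagged_azuma_abs {Ω : Type*} {m0 : MeasurableSpace Ω} {μ : Measure Ω}
    [IsProbabilityMeasure μ] (ℱ : Filtration ℕ m0) (τ : ℕ) (Y : ℕ → Ω → ℝ) (c : ℕ → ℝ)
    (hY : ∀ k, τ ≤ k → StronglyMeasurable[ℱ (k + 1)] (Y k))
    (hYc : ∀ k, τ ≤ k → ∀ᵐ ω ∂μ, |Y k ω| ≤ c k)
    (h0 : ∀ k, τ ≤ k → μ[Y k | ℱ (k - τ)] =ᵐ[μ] 0)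
    (k₀ t : ℕ) (hk₀ : τ ≤ k₀) (ht : k₀ ≤ t) (V : ℝ) (hV : 0 < V) (s : ℝ) (hs : 0 ≤ s)
    (hcV : ∑ k ∈ Ico k₀ t, c k ^ 2 ≤ V) :
    μ {ω | s ≤ |∑ k ∈ Ico k₀ t, Y k ω|}
      ≤ ENNReal.ofReal (2 * Real.exp (-(s ^ 2 / (2 * (τ + 1) * V)))) := by
  have h1 := lagged_azuma ℱ τ Y c hY hYc h0 k₀ t hk₀ ht V hV s hs hcV
  have h2 := lagged_azuma ℱ τ (fun k => -Y k) c (fun k hk => (hY k hk).neg)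
    (fun k hk => by simpa using hYc k hk)
    (fun k hk => (condExp_neg (Y k) (ℱ (k - τ))).trans (by
      filter_upwards [h0 k hk] with ω hω
      simp [hω])) k₀ t hk₀ ht V hV s hs hcV
  have hsub : {ω | s ≤ |∑ k ∈ Ico k₀ t, Y k ω|} ⊆
      {ω | s ≤ ∑ k ∈ Ico k₀ t, Y k ω} ∪ {ω | s ≤ ∑ k ∈ Ico k₀ t, (-Y k) ω} := by
    intro ω hω
    rcases le_abs.mp (show s ≤ |∑ k ∈ Ico k₀ t, Y k ω| from hω) with h | h
    · exact Or.inl h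
    · right
      simpa using h
  refine (measure_mono hsub).trans ((measure_union_le _ _).trans ((add_le_add h1 h2).trans ?_))
  rw [← ENNReal.ofReal_add (Real.exp_pos _).le (Real.exp_pos _).le, ← two_mul]

/-! ### High-probability control of the noise -/

lemma abs_noiseAcc_le (α d e : ℕ → ℝ) (sg : ℝ) (τ : ℕ) (hα : ∀ t, 0 < α t ∧ α t ≤ 1)
    (hsg : 0 < sg) (hd : ∀ t, τ ≤ t → sg ≤ d t ∧ d t ≤ 1) (t : ℕ) (ht : τ ≤ t) {b : ℝ}
    (hb : 0 ≤ b)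
    (hS : ∀ k₀, τ ≤ k₀ → k₀ < t → |∑ k ∈ Ico k₀ t, wt α sg k t * e k| ≤ b) :
    |noiseAcc α d e τ t| ≤ b := by
  have hS' : ∀ k₀, τ ≤ k₀ → k₀ ≤ t → |∑ k ∈ Ico k₀ t, wt α sg k t * e k| ≤ b := by
    intro k₀ h1 h2
    rcases h2.eq_or_lt with rfl | h2
    · simpa using hb
    · exact hS k₀ h1 h2
  rw [abs_le']
  constructor
  · obtain ⟨k₀, h1, h2, h3⟩ := exists_noiseAcc_le α d e sg τ hα hsg hd t ht
    exact h3.trans ((le_abs_self _).trans (hS' k₀ h1 h2))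
  · obtain ⟨k₀, h1, h2, h3⟩ :=
      exists_noiseAcc_le α d (fun k => -e k) sg τ hα hsg hd t ht
    rw [noiseAcc_neg] at h3
    refine h3.trans (le_trans ?_ (hS' k₀ h1 h2))
    simp only [mul_neg, sum_neg_distrib]
    exact neg_le_abs _

/-- Outside an event of probability at most `δ`, all weighted partial sums of the noise over
windows `[k₀, t)` with `τ ≤ k₀ < t ≤ T` are of order `1 / √(t + t0)`. -/
lemma exists_bad_event {Ω : Type*} {m0 : MeasurableSpace Ω} {μ : Measure Ω}
    [IsProbabilityMeasure μ] (ℱ : Filtration ℕ m0) {n : ℕ} (hn : 0 < n) (τ T : ℕ) (hτ : 0 < τ)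
    (hT : τ ≤ T) (E : ℕ → Fin n → Ω → ℝ) (eb : ℝ) (heb : 0 < eb)
    (hE : ∀ k, τ ≤ k → ∀ i, StronglyMeasurable[ℱ (k + 1)] (E k i))
    (hEb : ∀ k, τ ≤ k → ∀ i, ∀ᵐ ω ∂μ, |E k i ω| ≤ eb)
    (hE0 : ∀ k, τ ≤ k → ∀ i, μ[E k i | ℱ (k - τ)] =ᵐ[μ] 0)
    (α : ℕ → ℝ) (sg h t0 : ℝ) (hα : ∀ t, 0 < α t ∧ α t ≤ 1)
    (hsg : 0 < sg) (hsg1 : sg < 1) (hh : 2 ≤ sg * h) (ht0 : 0 < t0)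
    (hstep : ∀ t : ℕ, α t = h / ((t : ℝ) + t0)) (δ : ℝ) (hδ0 : 0 < δ) (hδ1 : δ < 1) :
    ∃ bad : Set Ω, μ bad ≤ ENNReal.ofReal δ ∧ ∀ ω, ω ∉ bad → ∀ t, τ ≤ t → t ≤ T →
      ∀ (i : Fin n) (k₀ : ℕ), τ ≤ k₀ → k₀ < t →
      |∑ k ∈ Ico k₀ t, wt α sg k t * E k i ω| ≤
        6 * eb * Real.sqrt (((τ : ℝ) + 1) * h / sg) *
          Real.sqrt (Real.log (2 * ((τ : ℝ) + 1) * (T : ℝ) ^ 2 * (n : ℝ) / δ))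
          / Real.sqrt ((t : ℝ) + t0) := by
  have hh0 : 0 < h := by
    by_contra hc
    nlinarith
  have hT0 : (1 : ℝ) ≤ T := by exact_mod_cast (by omega : 1 ≤ T)
  have hn0 : (1 : ℝ) ≤ n := by exact_mod_cast hn
  set N : ℝ := 2 * ((τ : ℝ) + 1) * (T : ℝ) ^ 2 * (n : ℝ) / δ with hN
  have hN1 : 1 ≤ N := by
    rw [hN, le_div_iff₀ hδ0]
    have h1 : (1 : ℝ) ≤ 2 * ((τ : ℝ) + 1) := by
      have : (0 : ℝ) ≤ τ := Nat.cast_nonneg _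
      linarith
    have h2 : (1 : ℝ) ≤ (T : ℝ) ^ 2 := one_le_pow₀ hT0
    have h3 := one_le_mul_of_one_le_of_one_le (one_le_mul_of_one_le_of_one_le h1 h2) hn0
    linarith
  have hN0 : 0 < N := by linarith
  set L : ℝ := Real.log N with hL
  have hL0 : 0 ≤ L := Real.log_nonneg hN1
  set b : ℕ → ℝ := fun t => 6 * eb * Real.sqrt (((τ : ℝ) + 1) * h / sg) * Real.sqrt L
    / Real.sqrt ((t : ℝ) + t0) with hb
  have hb0 : ∀ t, 0 ≤ b t := fun t => by positivity
  set B : Fin n × ℕ × ℕ → Set Ω := fun p =>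
    {ω | p.2.2 < p.2.1 ∧ b p.2.1 ≤ |∑ k ∈ Ico p.2.2 p.2.1, wt α sg k p.2.1 * E k p.1 ω|} with hB
  set P : Finset (Fin n × ℕ × ℕ) := univ ×ˢ (Ioc τ T ×ˢ Ico τ T) with hP
  refine ⟨⋃ p ∈ P, B p, ?_, ?_⟩
  · have hone : ∀ p ∈ P, μ (B p) ≤ ENNReal.ofReal (2 * N⁻¹) := by
      rintro ⟨i, t, k₀⟩ hp
      simp only [hP, mem_product, mem_univ, true_and, mem_Ioc, mem_Ico] at hp
      obtain ⟨⟨ht1, ht2⟩, hk1, hk2⟩ := hp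
      by_cases hlt : k₀ < t
      swap
      · simp [hB, hlt]
      have hm : 0 < (t : ℝ) + t0 := by positivity
      have haz := lagged_azuma_abs (μ := μ) ℱ τ (fun k ω => wt α sg k t * E k i ω)
        (fun k => |wt α sg k t| * eb) (fun k hk => (hE k hk i).const_mul _)
        (fun k hk => by
          filter_upwards [hEb k hk i] with ω hω
          rw [abs_mul]
          exact mul_le_mul_of_nonneg_left hω (abs_nonneg _))
        (fun k hk => by
          have h1 := condExp_smul (μ := μ) (wt α sg k t) (E k i) (ℱ (k - τ))
          filter_upwards [h1, hE0 k hk i] with ω h2 h3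
          have h4 : (fun ω => wt α sg k t * E k i ω) = wt α sg k t • E k i := rfl
          rw [h4, h2]; simp [h3])
        k₀ t hk1 hlt.le (eb ^ 2 * (2 * h / sg / ((t : ℝ) + t0))) (by positivity) (b t) (hb0 t)
        (by
          have := sum_wt_sq_le α sg h t0 hα hsg hsg1 hh ht0 hstep k₀ t hlt.le
          have e : ∀ k, (|wt α sg k t| * eb) ^ 2 = eb ^ 2 * wt α sg k t ^ 2 := by
            intro k; rw [mul_pow, sq_abs]; ring
          simp only [e]
          rw [← mul_sum]
          exact mul_le_mul_of_nonneg_left this (by positivity))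
      have hsub : B (i, t, k₀) ⊆ {ω | b t ≤ |∑ k ∈ Ico k₀ t, wt α sg k t * E k i ω|} :=
        fun ω hω => hω.2
      refine (measure_mono hsub).trans (haz.trans (ENNReal.ofReal_le_ofReal ?_))
      have e1 : b t ^ 2 = 36 * eb ^ 2 * (((τ : ℝ) + 1) * h / sg) * L / ((t : ℝ) + t0) := by
        simp only [hb]
        rw [div_pow, mul_pow, mul_pow, Real.sq_sqrt (by positivity), Real.sq_sqrt hL0,
          Real.sq_sqrt hm.le]
        ring
      have e2 : b t ^ 2 / (2 * (τ + 1) * (eb ^ 2 * (2 * h / sg / ((t : ℝ) + t0)))) = 9 * L := by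
        rw [e1]; field_simp; ring
      rw [e2]
      have e3 : N⁻¹ = Real.exp (-L) := by rw [Real.exp_neg, hL, Real.exp_log hN0]
      rw [e3]
      refine mul_le_mul_of_nonneg_left (Real.exp_le_exp.mpr ?_) (by norm_num)
      linarith
    refine (measure_biUnion_finset_le P B).trans ((sum_le_sum hone).trans ?_)
    rw [sum_const, nsmul_eq_mul]
    have hcard : (P.card : ℝ) ≤ n * (T * T) := by
      have : P.card ≤ n * (T * T) := by
        simp only [hP, card_product, card_univ, Fintype.card_fin, Nat.card_Ioc, Nat.card_Ico]
        exact Nat.mul_le_mul le_rfl (Nat.mul_le_mul (Nat.sub_le _ _) (Nat.sub_le _ _))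
      exact_mod_cast this
    rw [← ENNReal.ofReal_natCast, ← ENNReal.ofReal_mul (Nat.cast_nonneg _)]
    refine ENNReal.ofReal_le_ofReal ?_
    calc (P.card : ℝ) * (2 * N⁻¹) ≤ n * (T * T) * (2 * N⁻¹) :=
          mul_le_mul_of_nonneg_right hcard (by positivity)
      _ = δ / ((τ : ℝ) + 1) := by rw [hN]; field_simp
      _ ≤ δ := div_le_self hδ0.le (by
          have : (0 : ℝ) ≤ τ := Nat.cast_nonneg _
          linarith)
  · intro ω hω t h1 h2 i k₀ h3 h4
    by_contra hc
    apply hω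
    simp only [Set.mem_iUnion]
    refine ⟨(i, t, k₀), ?_, h4, (not_le.mp hc).le⟩
    simp only [hP, mem_product, mem_univ, true_and, mem_Ioc, mem_Ico]
    omega

/-- The noise is centred given the lagged past `m₁`: its first summand because the indicator `I` is
centred by its own conditional expectation, its second by the tower property through `m₂`. -/
lemma condExp_noise_eq_zero {Ω : Type*} {m₁ m₂ m0 : MeasurableSpace Ω} {μ : Measure Ω}
    [IsProbabilityMeasure μ] (h12 : m₁ ≤ m₂) (h20 : m₂ ≤ m0) {I g J w : Ω → ℝ} {G K W : ℝ}
    (hI : StronglyMeasurable I) (hI1 : ∀ ω, |I ω| ≤ 1)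
    (hg : StronglyMeasurable[m₁] g) (hgG : ∀ᵐ ω ∂μ, |g ω| ≤ G)
    (hJ : StronglyMeasurable[m₂] J) (hJK : ∀ᵐ ω ∂μ, |J ω| ≤ K)
    (hw : StronglyMeasurable w) (hwW : ∀ᵐ ω ∂μ, |w ω| ≤ W) (hw0 : μ[w | m₂] =ᵐ[μ] 0) :
    μ[g * (I - μ[I | m₁]) + J * w | m₁] =ᵐ[μ] 0 := by
  have hm1 : m₁ ≤ m0 := h12.trans h20
  have iI : Integrable I μ := integrable_of_ae_abs_le hI.aestronglyMeasurable (ae_of_all _ hI1)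
  have iw : Integrable w μ := integrable_of_ae_abs_le hw.aestronglyMeasurable hwW
  have iId : Integrable (I - μ[I | m₁]) μ := iI.sub integrable_condExp
  have igI : Integrable (g * (I - μ[I | m₁])) μ :=
    iId.bdd_mul (hg.mono hm1).aestronglyMeasurable hgG
  have iJw : Integrable (J * w) μ := iw.bdd_mul (hJ.mono h20).aestronglyMeasurable hJK
  have a1 : μ[I - μ[I | m₁] | m₁] =ᵐ[μ] 0 := by
    have h1 := condExp_sub (m := m₁) iI (integrable_condExp (μ := μ) (m := m₁) (f := I))
    rw [condExp_of_stronglyMeasurable hm1 stronglyMeasurable_condExp integrable_condExp] at h1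
    simpa using h1
  have a2 : μ[J * w | m₁] =ᵐ[μ] 0 := by
    have h1 : μ[J * w | m₂] =ᵐ[μ] 0 := by
      filter_upwards [condExp_mul_of_stronglyMeasurable_left hJ iJw iw, hw0] with ω h2 h3
      simp [h2, h3]
    have h2 := condExp_condExp_of_le (μ := μ) (f := J * w) h12 h20
    refine h2.symm.trans ((condExp_congr_ae h1).trans ?_)
    rw [condExp_zero]
  filter_upwards [condExp_add igI iJw m₁, condExp_mul_of_stronglyMeasurable_left hg igI iId,
    a1, a2] with ω h1 h2 h3 h4
  rw [h1, Pi.add_apply, h2, Pi.mul_apply, h3, h4]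
  simp

/-! ### The finite-time bound -/

lemma continuous_of_vnorm_contraction {n : ℕ} {v : Fin n → ℝ} (hv : ∀ i, 0 < v i)
    {F : (Fin n → ℝ) → (Fin n → ℝ)} {γ : ℝ} (hγ0 : 0 < γ)
    (hcontr : ∀ x y, vnorm v (F x - F y) ≤ γ * vnorm v (x - y)) : Continuous F := by
  refine continuous_pi fun i => ?_
  have hn : 0 < n := i.pos
  have hK : ∀ x y : Fin n → ℝ, vnorm v (x - y) ≤ (∑ j, (v j)⁻¹) * dist x y := by
    intro x y
    refine vnorm_le hn fun j => ?_
    rw [div_eq_inv_mul]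
    refine mul_le_mul (single_le_sum (f := fun j => (v j)⁻¹)
      (fun j _ => (inv_pos.mpr (hv j)).le) (mem_univ j)) ?_ (abs_nonneg _)
      (sum_nonneg fun j _ => (inv_pos.mpr (hv j)).le)
    exact dist_le_pi_dist x y j
  refine (LipschitzWith.of_dist_le' (K := v i * (γ * ∑ j, (v j)⁻¹)) fun x y => ?_).continuous
  have h1 := (abs_div_le_vnorm v (F x - F y) i).trans (hcontr x y)
  rw [div_le_iff₀ (hv i)] at h1
  have h2 := mul_le_mul_of_nonneg_left (hK x y) hγ0.le
  rw [Real.dist_eq]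
  calc |F x i - F y i| ≤ γ * vnorm v (x - y) * v i := h1
    _ ≤ γ * ((∑ j, (v j)⁻¹) * dist x y) * v i := mul_le_mul_of_nonneg_right h2 (hv i).le
    _ = _ := by ring

/-- **Theorem 1 (main finite-time bound for asynchronous SA).**
Under the contraction assumption on `F`, the martingale-difference noise assumption on `w`,
the sufficient-exploration assumption on `i_t`, an almost-sure bound `‖x(t)‖_v ≤ x̄`, and the
rescaled linear step size `α_t = h/(t+t₀)` with `t₀ ≥ max(4h, τ)`, `h ≥ 2/(σ(1-γ))`, for every
`T ≥ τ` and `δ ∈ (0,1)`, with probability at least `1 - δ`,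
`‖x(T) - x*‖_v ≤ (12ε̄/(1-γ))·√((τ+1)h/σ)·√(log(2(τ+1)T²n/δ)/(T+t₀))
  + (4/(1-γ))·max(16ε̄hτ/σ, 2x̄(τ+t₀))·1/(T+t₀)`, where `ε̄ = 2x̄ + C + w̄/v̲`. -/
theorem asynchronous_SA_finite_time_bound
    {Ω : Type*} {m0 : MeasurableSpace Ω} (μ : Measure Ω) [IsProbabilityMeasure μ]
    (ℱ : Filtration ℕ m0)
    (n : ℕ) (hn : 0 < n) (v : Fin n → ℝ) (hv : ∀ i, 0 < v i)
    -- Assumption 1 (contraction)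
    (F : (Fin n → ℝ) → (Fin n → ℝ)) (γ C : ℝ) (hγ0 : 0 < γ) (hγ1 : γ < 1) (hC : 0 < C)
    (hcontr : ∀ x y, vnorm v (F x - F y) ≤ γ * vnorm v (x - y))
    (hFbd : ∀ x, vnorm v (F x) ≤ γ * vnorm v x + C)
    (xstar : Fin n → ℝ) (hfix : F xstar = xstar)
    -- the asynchronous SA scheme
    (idx : ℕ → Ω → Fin n) (hidx : ∀ t, Measurable[ℱ t] (idx t))
    (w : ℕ → Ω → ℝ) (wbar : ℝ)
    (α : ℕ → ℝ) (hα : ∀ t, α t ∈ Set.Ioc (0 : ℝ) 1)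
    (X : ℕ → Ω → Fin n → ℝ) (hX0 : ∀ ω, X 0 ω = 0)
    (hupd : ∀ t ω i, X (t + 1) ω i =
      if i = idx t ω then X t ω i + α t * (F (X t ω) i - X t ω i + w t ω) else X t ω i)
    -- Assumption 2 (martingale difference noise)
    (hw_meas : ∀ t, Measurable[ℱ (t + 1)] (w t))
    (hw_mean : ∀ t, μ[w t | ℱ t] =ᵐ[μ] 0)
    (hw_bd : ∀ t, ∀ᵐ ω ∂μ, |w t ω| ≤ wbar)
    -- Assumption 3 (sufficient exploration)
    (sg : ℝ) (τ : ℕ) (hsg0 : 0 < sg) (hsg1 : sg < 1) (hτ : 0 < τ)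
    (hexpl : ∀ (i : Fin n) (t : ℕ), τ ≤ t →
      ∀ᵐ ω ∂μ, sg ≤ (μ[(fun ω' => if idx t ω' = i then (1 : ℝ) else 0) | ℱ (t - τ)]) ω)
    -- almost sure boundedness of the iterates
    (xbar : ℝ) (hxbar : vnorm v xstar ≤ xbar)
    (hXbd : ∀ t, ∀ᵐ ω ∂μ, vnorm v (X t ω) ≤ xbar)
    -- step sizes
    (h t0 : ℝ) (ht0 : max (4 * h) (τ : ℝ) ≤ t0) (hh : 2 / (sg * (1 - γ)) ≤ h)
    (hstep : ∀ t, α t = h / ((t : ℝ) + t0))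
    -- horizon and confidence level
    (T : ℕ) (hT : τ ≤ T) (δ : ℝ) (hδ0 : 0 < δ) (hδ1 : δ < 1) :
    ENNReal.ofReal (1 - δ) ≤
      μ {ω | vnorm v (X T ω - xstar) ≤
        (12 * (2 * xbar + C + wbar / ⨅ i, v i) / (1 - γ)) *
          Real.sqrt (((τ : ℝ) + 1) * h / sg) *
          Real.sqrt (Real.log (2 * ((τ : ℝ) + 1) * (T : ℝ) ^ 2 * (n : ℝ) / δ) / ((T : ℝ) + t0)) +
        (4 / (1 - γ)) *
          max (16 * (2 * xbar + C + wbar / ⨅ i, v i) * h * (τ : ℝ) / sg)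
            (2 * xbar * ((τ : ℝ) + t0)) * (1 / ((T : ℝ) + t0))} := by
  have hne : Nonempty (Fin n) := ⟨⟨0, hn⟩⟩
  have h1γ : 0 < 1 - γ := by linarith
  have hsh : 2 ≤ sg * h * (1 - γ) := by
    rw [div_le_iff₀ (by positivity)] at hh
    linarith
  have hh0 : 0 < h := lt_of_lt_of_le (by positivity) hh
  have hsh2 : 2 ≤ sg * h := by
    have := mul_pos (mul_pos hsg0 hh0) hγ0
    linarith
  have hτt0 : (τ : ℝ) ≤ t0 := (le_max_right _ _).trans ht0
  have hτR : (1 : ℝ) ≤ τ := by exact_mod_cast hτ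
  have ht0pos : 0 < t0 := by linarith
  have hα' : ∀ t, 0 < α t ∧ α t ≤ 1 := fun t => hα t
  have hvm : 0 < ⨅ i, v i := by
    obtain ⟨i, hi⟩ := exists_eq_ciInf_of_finite (f := v)
    rw [← hi]; exact hv i
  have hvmi : ∀ i, (⨅ i, v i) ≤ v i := fun i => ciInf_le (Set.finite_range _).bddBelow i
  have hw0 : 0 ≤ wbar := by
    obtain ⟨ω, hω⟩ := (hw_bd 0).exists
    exact (abs_nonneg _).trans hω
  have hxst : ∀ i, |xstar i| / v i ≤ xbar := fun i => (abs_div_le_vnorm v xstar i).trans hxbar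
  have hxb0 : 0 ≤ xbar :=
    (div_nonneg (abs_nonneg _) (hv ⟨0, hn⟩).le).trans (hxst ⟨0, hn⟩)
  set eb : ℝ := 2 * xbar + C + wbar / ⨅ i, v i with heb
  have heb0 : 0 < eb := by positivity
  have hwv : ∀ i x, |x| ≤ wbar → |x / v i| ≤ wbar / ⨅ i, v i := by
    intro i x hx
    rw [abs_div, abs_of_pos (hv i)]
    exact div_le_div₀ hw0 hx hvm (hvmi i)
  have hgap : ∀ x, vnorm v x ≤ xbar → ∀ i, |(F x i - x i) / v i| ≤ 2 * xbar + C := by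
    intro x hx i
    have h1 := (abs_div_le_vnorm v (F x) i).trans (hFbd x)
    have h2 := (abs_div_le_vnorm v x i).trans hx
    have h3 : |(F x i - x i) / v i| ≤ |F x i| / v i + |x i| / v i := by
      rw [abs_div, abs_of_pos (hv i), ← add_div]
      exact div_le_div_of_nonneg_right (abs_sub _ _) (hv i).le
    have h4 : γ * vnorm v x ≤ xbar :=
      (mul_le_mul_of_nonneg_left hx hγ0.le).trans (mul_le_of_le_one_left hxb0 hγ1.le)
    linarith
  have hlip : ∀ x y a, (∀ j, |(x j - y j) / v j| ≤ a) → ∀ i,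
      |(F x i - F y i) / v i| ≤ γ * a := by
    intro x y a ha i
    have h1 : vnorm v (x - y) ≤ a := vnorm_le hn fun j => by
      have := ha j
      rwa [abs_div, abs_of_pos (hv j)] at this
    have h2 := (abs_div_le_vnorm v (F x - F y) i).trans (hcontr x y)
    rw [abs_div, abs_of_pos (hv i)]
    exact h2.trans (mul_le_mul_of_nonneg_left h1 hγ0.le)
  have hFm : Measurable F := (continuous_of_vnorm_contraction hv hγ0 hcontr).measurable
  have hXm : ∀ t, Measurable[ℱ t] (X t) := by
    intro t
    induction t with
    | zero =>
      have : X 0 = fun _ => 0 := funext hX0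
      rw [this]; exact measurable_const
    | succ t ih =>
      have hXt : Measurable[ℱ (t + 1)] (X t) := ih.mono (ℱ.mono (Nat.le_succ t)) le_rfl
      have hit : Measurable[ℱ (t + 1)] (idx t) := (hidx t).mono (ℱ.mono (Nat.le_succ t)) le_rfl
      refine @measurable_pi_lambda Ω (Fin n) (fun _ => ℝ) (ℱ (t + 1)) _ (X (t + 1)) fun i => ?_
      have hXi : Measurable[ℱ (t + 1)] (fun ω => X t ω i) := (measurable_pi_apply i).comp hXt
      have hFi : Measurable[ℱ (t + 1)] (fun ω => F (X t ω) i) :=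
        (measurable_pi_apply i).comp (hFm.comp hXt)
      have : (fun ω => X (t + 1) ω i) = fun ω => if i = idx t ω then
          X t ω i + α t * (F (X t ω) i - X t ω i + w t ω) else X t ω i :=
        funext fun ω => hupd t ω i
      rw [this]
      have hset : MeasurableSet[ℱ (t + 1)] {ω | i = idx t ω} := by
        have : {ω | i = idx t ω} = idx t ⁻¹' {i} := by ext ω; simp [eq_comm]
        rw [this]
        exact hit (measurableSet_singleton i)
      exact Measurable.ite hset (hXi.add (((hFi.sub hXi).add (hw_meas t)).const_mul _)) hXi
  -- visit indicator, its lagged conditional probability, and the centred noise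
  set I : ℕ → Fin n → Ω → ℝ := fun t i ω => if idx t ω = i then (1 : ℝ) else 0 with hI
  set d : ℕ → Fin n → Ω → ℝ := fun t i => μ[I t i | ℱ (t - τ)] with hd
  set g : ℕ → Fin n → Ω → ℝ := fun t i ω => (F (X t ω) i - X t ω i) / v i with hg
  set E : ℕ → Fin n → Ω → ℝ := fun t i =>
    g (t - τ) i * (I t i - d t i) + (fun ω => I t i ω / v i) * w t with hE
  have hI01 : ∀ t i ω, 0 ≤ I t i ω ∧ I t i ω ≤ 1 := by
    intro t i ω
    simp only [hI]
    split_ifs <;> norm_num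
  have hIm : ∀ t i, StronglyMeasurable[ℱ t] (I t i) := by
    intro t i
    have : Measurable[ℱ t] (I t i) :=
      Measurable.ite (hidx t (measurableSet_singleton i)) measurable_const measurable_const
    exact this.stronglyMeasurable
  have hIabs : ∀ t i ω, |I t i ω| ≤ 1 := fun t i ω => by
    rw [abs_of_nonneg (hI01 t i ω).1]; exact (hI01 t i ω).2
  have hgm : ∀ t i, StronglyMeasurable[ℱ t] (g t i) := by
    intro t i
    have h1 : Measurable[ℱ t] (fun ω => X t ω i) := (measurable_pi_apply i).comp (hXm t)
    have h2 : Measurable[ℱ t] (fun ω => F (X t ω) i) :=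
      (measurable_pi_apply i).comp (hFm.comp (hXm t))
    exact ((h2.sub h1).div_const (v i)).stronglyMeasurable
  have hd1 : ∀ t i, ∀ᵐ ω ∂μ, d t i ω ≤ 1 := by
    intro t i
    have iI : Integrable (I t i) μ := integrable_of_ae_abs_le
      ((hIm t i).mono (ℱ.le t)).aestronglyMeasurable (ae_of_all _ (hIabs t i))
    have h1 := condExp_mono (m := ℱ (t - τ)) iI (integrable_const (μ := μ) (1 : ℝ))
      (ae_of_all _ fun ω => (hI01 t i ω).2)
    rw [condExp_const (ℱ.le _)] at h1
    exact h1
  have hae : ∀ᵐ ω ∂μ, (∀ t, |w t ω| ≤ wbar) ∧ (∀ t, vnorm v (X t ω) ≤ xbar) ∧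
      (∀ t, τ ≤ t → ∀ i, sg ≤ d t i ω ∧ d t i ω ≤ 1) := by
    have h1 : ∀ᵐ ω ∂μ, ∀ t, |w t ω| ≤ wbar := ae_all_iff.mpr hw_bd
    have h2 : ∀ᵐ ω ∂μ, ∀ t, vnorm v (X t ω) ≤ xbar := ae_all_iff.mpr hXbd
    have h3 : ∀ᵐ ω ∂μ, ∀ t, τ ≤ t → ∀ i, sg ≤ d t i ω ∧ d t i ω ≤ 1 := by
      rw [ae_all_iff]; intro t
      rw [Filter.eventually_imp_distrib_left]; intro ht
      rw [ae_all_iff]; intro i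
      filter_upwards [hexpl i t ht, hd1 t i] with ω h4 h5
      exact ⟨h4, h5⟩
    filter_upwards [h1, h2, h3] with ω a b c
    exact ⟨a, b, c⟩
  have hId : ∀ t i ω, sg ≤ d t i ω → d t i ω ≤ 1 → |I t i ω - d t i ω| ≤ 1 := by
    intro t i ω h1 h2
    have := hI01 t i ω
    rw [abs_le]
    constructor <;> linarith
  have hEb : ∀ t, τ ≤ t → ∀ i, ∀ᵐ ω ∂μ, |E t i ω| ≤ eb := by
    intro t ht i
    filter_upwards [hae] with ω hω
    obtain ⟨h1, h2, h3⟩ := hω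
    have a1 := hgap (X (t - τ) ω) (h2 _) i
    have a2 := hwv i (w t ω) (h1 t)
    have a3 := hId t i ω (h3 t ht i).1 (h3 t ht i).2
    have a4 : |g (t - τ) i ω * (I t i ω - d t i ω)| ≤ 2 * xbar + C := by
      rw [abs_mul]
      exact (mul_le_of_le_one_right (abs_nonneg _) a3).trans a1
    have a5 : |I t i ω / v i * w t ω| ≤ wbar / ⨅ i, v i := by
      have : I t i ω / v i * w t ω = I t i ω * (w t ω / v i) := by ring
      rw [this, abs_mul]
      exact (mul_le_of_le_one_left (abs_nonneg _) (hIabs t i ω)).trans a2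
    have a6 : |E t i ω| ≤ |g (t - τ) i ω * (I t i ω - d t i ω)| + |I t i ω / v i * w t ω| :=
      abs_add_le _ _
    linarith
  have hEm : ∀ t, τ ≤ t → ∀ i, StronglyMeasurable[ℱ (t + 1)] (E t i) := by
    intro t _ i
    have h1 : StronglyMeasurable[ℱ (t + 1)] (I t i) := (hIm t i).mono (ℱ.mono (Nat.le_succ t))
    have h2 : StronglyMeasurable[ℱ (t + 1)] (g (t - τ) i) :=
      (hgm (t - τ) i).mono (ℱ.mono (by omega))
    have h3 : StronglyMeasurable[ℱ (t + 1)] (d t i) :=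
      stronglyMeasurable_condExp.mono (ℱ.mono (by omega))
    have h4 : StronglyMeasurable[ℱ (t + 1)] (fun ω => I t i ω / v i) :=
      (h1.measurable.div_const (v i)).stronglyMeasurable
    exact (h2.mul (h1.sub h3)).add (h4.mul (hw_meas t).stronglyMeasurable)
  have hE0 : ∀ t, τ ≤ t → ∀ i, μ[E t i | ℱ (t - τ)] =ᵐ[μ] 0 := by
    intro t _ i
    refine condExp_noise_eq_zero (ℱ.mono (Nat.sub_le t τ)) (ℱ.le t) ((hIm t i).mono (ℱ.le t))
      (hIabs t i) (hgm (t - τ) i) (G := 2 * xbar + C) ?_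
      ((hIm t i).measurable.div_const (v i)).stronglyMeasurable (K := 1 / v i) ?_
      ((hw_meas t).mono (ℱ.le _) le_rfl).stronglyMeasurable (hw_bd t) (hw_mean t)
    · filter_upwards [hXbd (t - τ)] with ω hω
      exact hgap _ hω i
    · refine ae_of_all _ fun ω => ?_
      rw [abs_div, abs_of_pos (hv i)]
      exact div_le_div_of_nonneg_right (hIabs t i ω) (hv i).le
  obtain ⟨bad, hbad, hgood⟩ := exists_bad_event ℱ hn τ T hτ hT E eb heb0 hEm hEb hE0 α sg h t0
    hα' hsg0 hsg1 hsh2 ht0pos hstep δ hδ0 hδ1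
  set L : ℝ := Real.log (2 * ((τ : ℝ) + 1) * (T : ℝ) ^ 2 * (n : ℝ) / δ) with hL
  set M : ℝ := max (16 * eb * h * (τ : ℝ) / sg) (2 * xbar * ((τ : ℝ) + t0)) with hM
  have hM1 : 16 * eb * h * (τ : ℝ) / sg ≤ M := le_max_left _ _
  have hM2 : 2 * xbar * ((τ : ℝ) + t0) ≤ M := le_max_right _ _
  set Cε : ℝ := 6 * eb * Real.sqrt (((τ : ℝ) + 1) * h / sg) * Real.sqrt L with hCε
  have hCε0 : 0 ≤ Cε := by positivity
  have hM0 : 0 ≤ M := le_trans (by positivity) hM1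
  set R : Set Ω := {ω | vnorm v (X T ω - xstar) ≤ 12 * eb / (1 - γ) *
    Real.sqrt (((τ : ℝ) + 1) * h / sg) * Real.sqrt (L / ((T : ℝ) + t0)) +
    4 / (1 - γ) * M * (1 / ((T : ℝ) + t0))} with hR
  have hmain : ∀ᵐ ω ∂μ, ω ∉ bad → ω ∈ R := by
    filter_upwards [hae] with ω hω hnb
    obtain ⟨hw1, hX1, hdω⟩ := hω
    have hTm : 0 < (T : ℝ) + t0 := by positivity
    refine vnorm_le hn fun i => ?_
    -- one step moves a coordinate by at most `α t * eb`
    have hinc : ∀ t i, |(X (t + 1) ω i - X t ω i) / v i| ≤ α t * eb := by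
      intro t i
      have e1 : (X (t + 1) ω i - X t ω i) / v i
          = α t * (I t i ω * (g t i ω + w t ω / v i)) := by
        rw [hupd t ω i]
        by_cases hi : idx t ω = i
        · have hvi := (hv i).ne'
          simp only [hi, hI, hg, if_true]
          field_simp
          ring
        · simp [hI, hi, Ne.symm hi]
      rw [e1, abs_mul, abs_of_pos (hα' t).1, abs_mul]
      refine mul_le_mul_of_nonneg_left ?_ (hα' t).1.le
      refine (mul_le_of_le_one_left (abs_nonneg _) (hIabs t i ω)).trans ?_
      refine (abs_add_le _ _).trans ?_
      exact add_le_add (hgap _ (hX1 t) i) (hwv i _ (hw1 t))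
    have hlag : ∀ t, τ ≤ t → ∀ i,
        |(X t ω i - X (t - τ) ω i) / v i| ≤ 2 * τ * h * eb / ((t : ℝ) + t0) := by
      intro t ht i
      have e1 : (X t ω i - X (t - τ) ω i) / v i
          = ∑ k ∈ Ico (t - τ) t, (X (k + 1) ω i - X k ω i) / v i := by
        rw [← sum_div, sum_Ico_sub (fun k => X k ω i) (Nat.sub_le t τ)]
      rw [e1]
      refine (abs_sum_le_sum_abs _ _).trans ?_
      have htR : (τ : ℝ) ≤ t := by exact_mod_cast ht
      have hterm : ∀ k ∈ Ico (t - τ) t,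
          |(X (k + 1) ω i - X k ω i) / v i| ≤ 2 * h / ((t : ℝ) + t0) * eb := by
        intro k hk
        refine (hinc k i).trans (mul_le_mul_of_nonneg_right ?_ heb0.le)
        have hkR : (t : ℝ) ≤ k + τ := by
          have := (mem_Ico.mp hk).1
          exact_mod_cast (by omega : t ≤ k + τ)
        -- `τ ≤ t` and `τ ≤ t0` give `t + t0 ≤ 2 * (k + t0)`
        rw [hstep k, div_le_div_iff₀ (by positivity) (by positivity)]
        have : h * ((t : ℝ) + t0) ≤ h * (2 * ((k : ℝ) + t0)) :=
          mul_le_mul_of_nonneg_left (by linarith) hh0.le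
        linarith
      refine (sum_le_card_nsmul _ _ _ hterm).trans (le_of_eq ?_)
      rw [Nat.card_Ico, Nat.sub_sub_self ht, nsmul_eq_mul]
      ring
    have hp := path_bound (fun t i => (X t ω i - xstar i) / v i)
      (fun t i => (F (X t ω) i - xstar i) / v i) (fun t i => E t i ω)
      (fun t i => (I t i ω - d t i ω) * (g t i ω - g (t - τ) i ω)) (fun t i => d t i ω)
      α τ T γ sg h t0 (2 * Cε / (1 - γ)) (4 * M / (1 - γ)) M (4 * τ * h * eb) Cε hγ0 hγ1 hα' hsg0
      hsh ht0pos hstep hdω (by positivity) (by positivity) hM0 (by field_simp) (by field_simp)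
      (by
        rw [div_le_iff₀ hsg0] at hM1
        have : 0 ≤ h * τ * eb := by positivity
        linarith)
      (by
        intro t ht i
        have hvi := (hv i).ne'
        have e1 : X (t + 1) ω i = X t ω i + α t * (I t i ω * (F (X t ω) i - X t ω i + w t ω)) := by
          rw [hupd t ω i]
          by_cases hi : idx t ω = i
          · simp [hI, hi]
          · simp [hI, hi, Ne.symm hi]
        simp only [e1, hE, hg, Pi.add_apply, Pi.mul_apply, Pi.sub_apply]
        field_simp
        ring)
      (by
        intro t i a ha
        have := hlip (X t ω) xstar a ha i
        rwa [hfix] at this)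
      (by
        intro t ht i
        have a1 := hlag t ht
        have a2 := hlip _ _ _ a1 i
        rw [abs_mul]
        refine (mul_le_of_le_one_left (abs_nonneg _)
          (hId t i ω (hdω t ht i).1 (hdω t ht i).2)).trans ?_
        have e1 : g t i ω - g (t - τ) i ω = (F (X t ω) i - F (X (t - τ) ω) i) / v i
            - (X t ω i - X (t - τ) ω i) / v i := by simp only [hg]; ring
        rw [e1]
        refine (abs_sub _ _).trans ?_
        have a3 : 0 ≤ 2 * τ * h * eb / ((t : ℝ) + t0) := by positivity
        have a4 := mul_le_of_le_one_left a3 hγ1.le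
        have a5 := a1 i
        have e2 : 4 * τ * h * eb / ((t : ℝ) + t0) = 2 * τ * h * eb / ((t : ℝ) + t0)
          + 2 * τ * h * eb / ((t : ℝ) + t0) := by ring
        rw [e2]
        linarith)
      (by
        intro t ht htT i
        exact abs_noiseAcc_le α _ _ sg τ hα' hsg0 (fun k hk => hdω k hk i) t ht (by positivity)
          (fun k₀ h1 h2 => hgood ω hnb t ht htT i k₀ h1 h2))
      (by
        intro i
        rw [le_div_iff₀ (by positivity)]
        refine le_trans (mul_le_mul_of_nonneg_right ?_ (by positivity)) hM2
        rw [abs_div, abs_of_pos (hv i)]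
        have a1 := (abs_div_le_vnorm v _ i).trans (hX1 τ)
        have a2 := hxst i
        have a3 : |X τ ω i - xstar i| / v i ≤ |X τ ω i| / v i + |xstar i| / v i := by
          rw [← add_div]
          exact div_le_div_of_nonneg_right (abs_sub _ _) (hv i).le
        linarith)
      hT i
    rw [abs_div, abs_of_pos (hv i)] at hp
    refine hp.trans (le_of_eq ?_)
    rw [Real.sqrt_div' _ hTm.le, hCε]
    ring
  have hone : (1 : ENNReal) ≤ μ R + ENNReal.ofReal δ := by
    have h1 : μ (R ∪ bad) = 1 := by
      rw [← measure_univ (μ := μ)]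
      refine measure_congr ?_
      filter_upwards [hmain] with ω hω
      have : ω ∈ R ∪ bad := by
        by_cases hb : ω ∈ bad
        · exact Or.inr hb
        · exact Or.inl (hω hb)
      exact propext ⟨fun _ => trivial, fun _ => this⟩
    calc (1 : ENNReal) = μ (R ∪ bad) := h1.symm
      _ ≤ μ R + μ bad := measure_union_le _ _
      _ ≤ _ := add_le_add le_rfl hbad
  rw [ENNReal.ofReal_sub _ hδ0.le, ENNReal.ofReal_one]
  exact tsub_le_iff_right.mpr hone
end

section
/- Let the step size be α_t = h/(t + t0) with t0 ≥ max(4h, τ) and h ≥ 4/(μ_min(1−γ)), where τ = ⌈log₂(2/μ_min)⌉ t_mix. Then for every T ≥ τ and every δ ∈ (0,1), with probability at least 1 − δ, ‖Q(T) − Q*‖_∞ ≤ (60 r̄/(1−γ)²) · √(2(τ+1)h/μ_min) · √(log(2(τ+1) T² |S||A|/δ)/(T + t0)) + (4 r̄/(1−γ)²) · max(160 h τ/μ_min, 2(τ + t0)) · 1/(T + t0). -/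
open MeasureTheory Finset

/-!
Write `x̄ = r̄ / (1 - γ)`, `σ = μ_min / 2` and `e(t) = Q(t) - Q*`. The iterates and `Q*` are bounded
by `x̄`. For a pair `p` and a time `t ≥ τ`, let `v` be the indicator of a visit of `p` at time `t`
and `d = P(v = 1 | ℱ_{t-τ}) ∈ [σ, 1]`. The update reads
`e(t+1) = e(t) + α_t (d (F(Q(t)) - Q* - e(t)) + ε + φ)`, where

* `ε = (v - d) (F(Q(t-τ)) - Q(t-τ)) + v (target - F(Q(t)))` (`qNoise`) is `ℱ_{t+1}`-measurable, at
  most `4 x̄` in absolute value, and orthogonal to every bounded `ℱ_{t-τ}`-measurable variable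
  (`qNoise_orthogonal`);
* `φ` is the error of freezing `F(Q) - Q` for `τ` steps, of order `x̄ τ α_t` (`qlearning_drift`).

The noise is accumulated with *deterministic* weights, `M(t+1) = (1 - α_t σ) M(t) + α_t ε`,
although the true weights `1 - α_t d` are random and depend on the pair. The difference `e - M`
then satisfies a recursion which contains no noise: the discrepancy between `d` and `σ` only
contributes the term `-α_t (d - σ) M(t)`, which is controlled by `|M(t)|`. Half of the contraction
`α_t d (1 - γ)` absorbs `M` and `φ`, the other half pays for the decrease of the bound in `t`. So
`|M(t)| ≤ c / √(t + t₀)` for all `t` implies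
`|e(t) - M(t)| ≤ 4 c / ((1 - γ) √(t + t₀)) + C / (t + t₀)` (`error_recursion`,
`qlearning_error_path`).

It remains to bound `M`. Since `ε` is centred only with respect to a `σ`-algebra `τ` steps older,
`M` is split as a sum of `τ + 1` parts, one for each residue class of the time modulo `τ + 1`
(`noiseClass`). Consecutive noise terms of one class are `τ + 1` steps apart, so each part is a
weighted martingale and has a sub-Gaussian moment generating function (`noiseClass_mgf`). The
Chernoff bounds of all parts are used with the same parameter `θ`, so that the variance proxies
add up, and their sum is at most `(4 x̄)² (h / σ) / (t + t₀)` (`sum_varClass_le`). A union bound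
over pairs, times, classes and signs (`noise_uniform_bound`) yields
`c = 6 x̄ √(2 (τ + 1) h / μ_min) √(log (2 (τ + 1) T² |S| |A| / δ))`.
-/

/-! ### Sub-Gaussian bounds for delayed noise -/

/-- The part of the accumulated noise `M (n + 1) = ρ n * M n + c n * ε n` that comes from the
times `n` with `n ≡ j` modulo `τ + 1`. -/
noncomputable def noiseClass (τ j : ℕ) (ρ c : ℕ → ℝ) (ε : ℕ → ℝ) : ℕ → ℝ
  | 0 => 0
  | n + 1 => ρ n * noiseClass τ j ρ c ε n + if n % (τ + 1) = j then c n * ε n else 0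

/-- The variance proxy of `noiseClass τ j ρ c ε` for noise bounded by `b`. -/
noncomputable def varClass (τ j : ℕ) (ρ c : ℕ → ℝ) (b : ℝ) : ℕ → ℝ
  | 0 => 0
  | n + 1 => ρ n ^ 2 * varClass τ j ρ c b n + if n % (τ + 1) = j then (c n * b) ^ 2 else 0

/-- The exponential lies below its chord on `[-b, b]`. For `b = 0` the quotient has the junk value
`0`, which is harmless since then `x = 0`. -/
theorem exp_mul_le_chord (x b θ : ℝ) (hx : |x| ≤ b) :
    Real.exp (θ * x) ≤ Real.cosh (θ * b) + x * (Real.sinh (θ * b) / b) := by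
  rcases (abs_nonneg x |>.trans hx).eq_or_lt with hb | hb
  · subst hb
    have : x = 0 := by simpa using hx
    simp [this]
  obtain ⟨h1, h2⟩ := abs_le.mp hx
  have hp : 0 ≤ (b + x) / (2 * b) := div_nonneg (by linarith) (by linarith)
  have hq : 0 ≤ (b - x) / (2 * b) := div_nonneg (by linarith) (by linarith)
  have hc := convexOn_exp.2 (Set.mem_univ (θ * b)) (Set.mem_univ (-(θ * b))) hp hq
    (by field_simp; ring)
  simp only [smul_eq_mul] at hc
  have e1 : (b + x) / (2 * b) * (θ * b) + (b - x) / (2 * b) * (-(θ * b)) = θ * x := by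
    field_simp; ring
  rw [e1] at hc
  refine hc.trans (le_of_eq ?_)
  rw [Real.cosh_eq, Real.sinh_eq]
  field_simp; ring

section
variable {Ω : Type*} {m0 : MeasurableSpace Ω} {μ : Measure Ω}

/-- The noise of one class is measurable at time `u` as soon as `u` is later than the last noise
term of that class; it need not be later than all the times up to `n`. -/
theorem noiseClass_stronglyMeasurable (ℱ : Filtration ℕ m0) (τ j : ℕ) (ρ c : ℕ → ℝ)
    (ε : ℕ → Ω → ℝ) (hmeas : ∀ n, StronglyMeasurable[ℱ (τ + n + 1)] (ε n)) (u : ℕ) :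
    ∀ n, (∀ k < n, k % (τ + 1) = j → τ + k + 1 ≤ u) →
      StronglyMeasurable[ℱ u] fun ω => noiseClass τ j ρ c (fun k => ε k ω) n := by
  intro n
  induction n with
  | zero => intro _; exact stronglyMeasurable_const
  | succ n ih =>
    intro hk
    simp only [noiseClass]
    refine (stronglyMeasurable_const.mul (ih fun k hkn => hk k (by omega))).add ?_
    split_ifs with hj
    · exact stronglyMeasurable_const.mul ((hmeas n).mono (ℱ.mono (hk n (by omega) hj)))
    · exact stronglyMeasurable_const

theorem noiseClass_bdd (τ j : ℕ) (ρ c : ℕ → ℝ) (b : ℝ)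
    (ε : ℕ → Ω → ℝ) (hbd : ∀ n, ∀ᵐ ω ∂μ, |ε n ω| ≤ b) :
    ∀ n, ∃ C, ∀ᵐ ω ∂μ, |noiseClass τ j ρ c (fun k => ε k ω) n| ≤ C := by
  intro n
  induction n with
  | zero => exact ⟨0, by simp [noiseClass]⟩
  | succ n ih =>
    obtain ⟨C, hC⟩ := ih
    refine ⟨|ρ n| * C + |c n| * b, ?_⟩
    filter_upwards [hC, hbd n] with ω h1 h2
    simp only [noiseClass]
    refine (abs_add_le _ _).trans (add_le_add ?_ ?_)
    · rw [abs_mul]; gcongr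
    · split_ifs
      · rw [abs_mul]; gcongr
      · have := (abs_nonneg _).trans h2
        simp; positivity

variable [IsProbabilityMeasure μ]

/-- One step of the Azuma–Hoeffding argument. Centring of `Y` given `m` is expressed by
orthogonality to the bounded `m`-measurable variables. -/
theorem integral_exp_add_le {m : MeasurableSpace Ω} (hm : m ≤ m0) {X Y : Ω → ℝ} {B b : ℝ}
    (hX : StronglyMeasurable[m] X) (hXb : ∀ᵐ ω ∂μ, |X ω| ≤ B)
    (hY : StronglyMeasurable[m0] Y) (hYb : ∀ᵐ ω ∂μ, |Y ω| ≤ b)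
    (horth : ∀ W : Ω → ℝ, StronglyMeasurable[m] W → (∃ C : ℝ, ∀ᵐ ω ∂μ, |W ω| ≤ C) →
      ∫ ω, W ω * Y ω ∂μ = 0) (θ : ℝ) :
    ∫ ω, Real.exp (X ω + θ * Y ω) ∂μ ≤
      Real.exp ((θ * b) ^ 2 / 2) * ∫ ω, Real.exp (X ω) ∂μ := by
  have hW : StronglyMeasurable[m] fun ω => Real.exp (X ω) :=
    Real.continuous_exp.comp_stronglyMeasurable hX
  have hWb : ∀ᵐ ω ∂μ, |Real.exp (X ω)| ≤ Real.exp B := by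
    filter_upwards [hXb] with ω hω
    rw [abs_of_pos (Real.exp_pos _)]
    exact Real.exp_le_exp.2 ((le_abs_self _).trans hω)
  have hWi : Integrable (fun ω => Real.exp (X ω)) μ :=
    Integrable.of_bound (hW.mono hm).aestronglyMeasurable _ hWb
  have hWYi : Integrable (fun ω => Real.exp (X ω) * Y ω) μ := by
    refine Integrable.of_bound ((hW.mono hm).mul hY).aestronglyMeasurable (Real.exp B * b) ?_
    filter_upwards [hWb, hYb] with ω h1 h2
    rw [Real.norm_eq_abs, abs_mul]
    exact mul_le_mul h1 h2 (abs_nonneg _) (Real.exp_pos _).le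
  have h0 := horth _ hW ⟨_, hWb⟩
  calc ∫ ω, Real.exp (X ω + θ * Y ω) ∂μ
      ≤ ∫ ω, (Real.cosh (θ * b) * Real.exp (X ω)
          + (Real.sinh (θ * b) / b) * (Real.exp (X ω) * Y ω)) ∂μ := by
        refine integral_mono_of_nonneg (Filter.Eventually.of_forall fun ω => (Real.exp_pos _).le)
          ((hWi.const_mul _).add (hWYi.const_mul _)) ?_
        filter_upwards [hYb] with ω hω
        have := mul_le_mul_of_nonneg_left (exp_mul_le_chord (Y ω) b θ hω) (Real.exp_pos (X ω)).le
        simp only [Real.exp_add]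
        linarith
    _ = Real.cosh (θ * b) * ∫ ω, Real.exp (X ω) ∂μ := by
        rw [integral_add (hWi.const_mul _) (hWYi.const_mul _), integral_const_mul,
          integral_const_mul, h0]; ring
    _ ≤ _ := mul_le_mul_of_nonneg_right (Real.cosh_le_exp_half_sq _)
        (integral_nonneg fun ω => (Real.exp_pos _).le)

/-- The noise of one residue class is sub-Gaussian with variance proxy `varClass`, although `ε n` is
centred only with respect to the delayed `σ`-algebra `ℱ n`. -/
theorem noiseClass_mgf (ℱ : Filtration ℕ m0) (τ j : ℕ) (ρ c : ℕ → ℝ) (b : ℝ)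
    (ε : ℕ → Ω → ℝ) (hmeas : ∀ n, StronglyMeasurable[ℱ (τ + n + 1)] (ε n))
    (hbd : ∀ n, ∀ᵐ ω ∂μ, |ε n ω| ≤ b)
    (horth : ∀ n, ∀ W : Ω → ℝ, StronglyMeasurable[ℱ n] W → (∃ C : ℝ, ∀ᵐ ω ∂μ, |W ω| ≤ C) →
      ∫ ω, W ω * ε n ω ∂μ = 0) :
    ∀ n (θ : ℝ), ∫ ω, Real.exp (θ * noiseClass τ j ρ c (fun k => ε k ω) n) ∂μ ≤
      Real.exp (θ ^ 2 * varClass τ j ρ c b n / 2) := by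
  intro n
  induction n with
  | zero => intro θ; simp [noiseClass, varClass]
  | succ n ih =>
    intro θ
    by_cases hj : n % (τ + 1) = j
    · have hM : StronglyMeasurable[ℱ n] fun ω => noiseClass τ j ρ c (fun k => ε k ω) n := by
        refine noiseClass_stronglyMeasurable ℱ τ j ρ c ε hmeas n n fun k hk hkj => ?_
        -- two distinct indices in the same residue class are at least `τ + 1` apart
        by_contra hcon
        have h1 := Nat.sub_mod_eq_zero_of_mod_eq (hj.trans hkj.symm)
        have h2 := Nat.eq_zero_of_dvd_of_lt (Nat.dvd_of_mod_eq_zero h1) (by omega)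
        omega
      obtain ⟨C, hC⟩ := noiseClass_bdd (μ := μ) τ j ρ c b ε hbd n
      have key := integral_exp_add_le (μ := μ) (ℱ.le n)
        (X := fun ω => (θ * ρ n) * noiseClass τ j ρ c (fun k => ε k ω) n)
        (B := |θ * ρ n| * C) (stronglyMeasurable_const.mul hM)
        (by filter_upwards [hC] with ω hω; rw [abs_mul]; gcongr)
        ((hmeas n).mono (ℱ.le _)) (hbd n) (horth n) (θ * c n)
      have h3 := mul_le_mul_of_nonneg_left (ih (θ * ρ n))
        (Real.exp_pos ((θ * c n * b) ^ 2 / 2)).le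
      rw [← Real.exp_add] at h3
      refine le_trans (le_of_eq ?_) (key.trans (h3.trans (le_of_eq ?_)))
      · congr 1; ext ω; simp only [noiseClass, hj, if_true]; ring_nf
      · simp only [varClass, hj, if_true]; ring_nf
    · have h3 := ih (θ * ρ n)
      refine le_trans (le_of_eq ?_) (h3.trans (le_of_eq ?_))
      · congr 1; ext ω; simp only [noiseClass, hj, if_false]; ring_nf
      · simp only [varClass, hj, if_false]; ring_nf

/-- Chernoff bound for the noise of one residue class, for a fixed parameter `θ` of any sign. -/
theorem noiseClass_tail (ℱ : Filtration ℕ m0) (τ j : ℕ) (ρ c : ℕ → ℝ) (b : ℝ)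
    (ε : ℕ → Ω → ℝ) (hmeas : ∀ n, StronglyMeasurable[ℱ (τ + n + 1)] (ε n))
    (hbd : ∀ n, ∀ᵐ ω ∂μ, |ε n ω| ≤ b)
    (horth : ∀ n, ∀ W : Ω → ℝ, StronglyMeasurable[ℱ n] W → (∃ C : ℝ, ∀ᵐ ω ∂μ, |W ω| ≤ C) →
      ∫ ω, W ω * ε n ω ∂μ = 0) (n : ℕ) (θ L : ℝ) :
    μ {ω | θ ^ 2 * varClass τ j ρ c b n / 2 + L ≤
      θ * noiseClass τ j ρ c (fun k => ε k ω) n} ≤ ENNReal.ofReal (Real.exp (-L)) := by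
  have hmgf := noiseClass_mgf (μ := μ) ℱ τ j ρ c b ε hmeas hbd horth n θ
  obtain ⟨C, hC⟩ := noiseClass_bdd (μ := μ) τ j ρ c b ε hbd n
  have hM : StronglyMeasurable[m0] fun ω => noiseClass τ j ρ c (fun k => ε k ω) n :=
    (noiseClass_stronglyMeasurable ℱ τ j ρ c ε hmeas (τ + n + 1) n
      fun k hk _ => by omega).mono (ℱ.le _)
  have hi : Integrable (fun ω => Real.exp (θ * noiseClass τ j ρ c (fun k => ε k ω) n)) μ := by
    refine Integrable.of_bound (Real.continuous_exp.comp_stronglyMeasurable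
      (stronglyMeasurable_const.mul hM)).aestronglyMeasurable (Real.exp (|θ| * C)) ?_
    filter_upwards [hC] with ω hω
    rw [Real.norm_eq_abs, abs_of_pos (Real.exp_pos _)]
    refine Real.exp_le_exp.2 ((le_abs_self _).trans ?_)
    rw [abs_mul]; gcongr
  have hmk := ProbabilityTheory.measure_ge_le_exp_mul_mgf (μ := μ)
    (X := fun ω => θ * noiseClass τ j ρ c (fun k => ε k ω) n)
    (θ ^ 2 * varClass τ j ρ c b n / 2 + L) zero_le_one (by simpa using hi)
  rw [← ofReal_measureReal]
  refine ENNReal.ofReal_le_ofReal (hmk.trans ?_)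
  simp only [ProbabilityTheory.mgf, one_mul]
  refine (mul_le_mul_of_nonneg_left hmgf (Real.exp_pos _).le).trans (le_of_eq ?_)
  rw [← Real.exp_add]; ring_nf
end

/-! ### The deterministic recursions -/

theorem sum_noiseClass_succ (τ : ℕ) (ρ c ε : ℕ → ℝ) (n : ℕ) :
    ∑ j ∈ range (τ + 1), noiseClass τ j ρ c ε (n + 1) =
      ρ n * ∑ j ∈ range (τ + 1), noiseClass τ j ρ c ε n + c n * ε n := by
  simp only [noiseClass, sum_add_distrib, ← mul_sum]
  rw [Finset.sum_ite_eq, if_pos (mem_range.2 (Nat.mod_lt _ (Nat.succ_pos τ)))]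

theorem sum_varClass_succ (τ : ℕ) (ρ c : ℕ → ℝ) (b : ℝ) (n : ℕ) :
    ∑ j ∈ range (τ + 1), varClass τ j ρ c b (n + 1) =
      ρ n ^ 2 * ∑ j ∈ range (τ + 1), varClass τ j ρ c b n + (c n * b) ^ 2 := by
  simp only [varClass, sum_add_distrib, ← mul_sum]
  rw [Finset.sum_ite_eq, if_pos (mem_range.2 (Nat.mod_lt _ (Nat.succ_pos τ)))]

/-- For the step sizes `h / (s₀ + n)` and the decay rate `σ`, the variance proxy summed over all
residue classes decays like the step size itself. -/
theorem sum_varClass_le (τ : ℕ) (σ h s₀ b : ℝ) (hσ0 : 0 < σ) (hσ1 : σ ≤ 1 / 2)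
    (hc : 2 ≤ σ * h) (hs : 4 * h ≤ s₀) (n : ℕ) :
    ∑ j ∈ range (τ + 1), varClass τ j (fun n => 1 - h / (s₀ + n) * σ)
      (fun n => h / (s₀ + n)) b n ≤ b ^ 2 * (h / σ) / (s₀ + n) := by
  have hh : 0 < h := pos_of_mul_pos_right (by linarith : 0 < σ * h) hσ0.le
  induction n with
  | zero =>
    simp only [varClass, sum_const_zero]
    have : (0:ℝ) < s₀ + ((0:ℕ):ℝ) := by push_cast; linarith
    positivity
  | succ n ih =>
    rw [sum_varClass_succ]
    push_cast
    rw [← add_assoc]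
    set s : ℝ := s₀ + n with hsdef
    have hs' : 4 * h ≤ s := by
      have : (0 : ℝ) ≤ n := Nat.cast_nonneg n
      linarith
    have hs0 : 0 < s := by linarith
    have hstep := mul_le_mul_of_nonneg_left ih (sq_nonneg (1 - h / s * σ))
    refine (add_le_add_left hstep _).trans ?_
    have e : (1 - h / s * σ) ^ 2 * (b ^ 2 * (h / σ) / s) + (h / s * b) ^ 2 =
        b ^ 2 * (h / σ) * ((s ^ 2 - (σ * h) * s + (σ * h) ^ 2) / s ^ 3) := by
      field_simp; ring
    have e2 : b ^ 2 * (h / σ) / (s + 1) = b ^ 2 * (h / σ) * (1 / (s + 1)) := by ring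
    rw [e, e2]
    refine mul_le_mul_of_nonneg_left ?_ (by positivity)
    rw [div_le_div_iff₀ (by positivity) (by positivity)]
    have h8 : 8 * (σ * h) ≤ s := by nlinarith
    nlinarith [mul_nonneg hs0.le hs0.le, mul_nonneg (sub_nonneg.2 hc) hs0.le,
      mul_nonneg (mul_nonneg (sub_nonneg.2 hc) hs0.le) hs0.le,
      mul_nonneg (sub_nonneg.2 h8) (mul_nonneg (by linarith : 0 ≤ σ * h) hs0.le),
      mul_nonneg (sub_nonneg.2 h8) (by linarith : 0 ≤ σ * h)]

theorem sqrt_step {s : ℝ} (hs : 1 ≤ s) : (1 - 1 / s) / √s ≤ 1 / √(s + 1) := by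
  have hs0 : 0 < s := by linarith
  rw [div_le_div_iff₀ (by positivity) (by positivity), one_mul]
  refine Real.le_sqrt_of_sq_le ?_
  rw [mul_pow, Real.sq_sqrt (by linarith)]
  have : 1 - 1 / s = (s - 1) / s := by field_simp
  rw [this, div_pow, div_mul_eq_mul_div, div_le_iff₀ (by positivity)]
  nlinarith

theorem inv_step {s : ℝ} (hs : 1 ≤ s) : (1 - 1 / s) / s ≤ 1 / (s + 1) := by
  have hs0 : 0 < s := by linarith
  rw [div_le_div_iff₀ (by positivity) (by positivity)]
  have : 1 - 1 / s = (s - 1) / s := by field_simp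
  rw [this, div_mul_eq_mul_div, div_le_iff₀ (by positivity)]
  nlinarith

/-- The deterministic core of the argument: `e` follows a contracting recursion with weights `d`,
noise `ε` and perturbation `φ`, and `M` accumulates the same noise with the constant weight
`σ ≤ d`. If `M` decays like `c / √(s₀ + n)`, so does `e - M`, with an additional `C_b / (s₀ + n)`. -/
theorem error_recursion {ι : Type*} (N : ℕ) (γ σ h s₀ c C_b K : ℝ)
    (hγ0 : 0 < γ) (hγ1 : γ < 1) (hσ0 : 0 < σ)
    (hc : 2 ≤ σ * h * (1 - γ)) (hs : 4 * h ≤ s₀) (hs1 : 1 ≤ s₀) (hcpos : 0 ≤ c)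
    (hK : 2 * K ≤ σ * (1 - γ) * C_b) (hCb : 0 ≤ C_b)
    (e M d f ε φ : ℕ → ι → ℝ)
    (he : ∀ n p, e (n + 1) p = e n p + h / (s₀ + n) * (d n p * (f n p - e n p) + (ε n p + φ n p)))
    (hf : ∀ n C, (∀ p, |e n p| ≤ C) → ∀ p, |f n p| ≤ γ * C)
    (hM0 : ∀ p, M 0 p = 0)
    (hM : ∀ n p, M (n + 1) p = (1 - h / (s₀ + n) * σ) * M n p + h / (s₀ + n) * ε n p)
    (hd : ∀ n p, σ ≤ d n p ∧ d n p ≤ 1)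
    (hφ : ∀ n p, |φ n p| ≤ K / (s₀ + n))
    (hMb : ∀ n ≤ N, ∀ p, |M n p| ≤ c / √(s₀ + n))
    (he0 : ∀ p, |e 0 p| ≤ C_b / s₀) :
    ∀ n ≤ N, ∀ p, |e n p - M n p| ≤ (4 * c / (1 - γ)) / √(s₀ + n) + C_b / (s₀ + n) := by
  have hγ : 0 < 1 - γ := by linarith
  have hh : 0 < h := by
    have : 0 < σ * h := pos_of_mul_pos_left (by linarith) hγ.le
    exact pos_of_mul_pos_right this hσ0.le
  intro n
  induction n with
  | zero =>
    intro _ p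
    rw [hM0, sub_zero]
    refine (he0 p).trans ?_
    simp only [Nat.cast_zero, add_zero]
    have : 0 ≤ 4 * c / (1 - γ) / √s₀ := by positivity
    linarith
  | succ n ih =>
    intro hn p
    have ih := ih (by omega)
    have hMn := hMb n (by omega)
    push_cast
    rw [← add_assoc]
    have hcast : (0 : ℝ) ≤ n := Nat.cast_nonneg n
    have he := he n p
    have hM := hM n p
    have hφ := hφ n p
    have hf := hf n
    obtain ⟨hd1, hd2⟩ := hd n p
    set s : ℝ := s₀ + n
    have hs1 : 1 ≤ s := by simp only [s]; linarith
    have hs4 : 4 * h ≤ s := by simp only [s]; linarith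
    have hs0 : 0 < s := by linarith
    set α := h / s with hα
    have hα0 : 0 < α := by positivity
    have hα1 : α ≤ 1 := by rw [hα, div_le_one hs0]; linarith
    set m := c / √s with hm
    set u := 4 * c / (1 - γ) / √s with hu
    set v := C_b / s with hv
    have hm0 : 0 ≤ m := by positivity
    have hu0 : 0 ≤ u := by positivity
    have hv0 : 0 ≤ v := by positivity
    have hum : (1 - γ) * u = 4 * m := by rw [hu, hm]; field_simp
    have hen : ∀ p, |e n p| ≤ u + v + m := fun p => by
      have : e n p = (e n p - M n p) + M n p := by ring
      rw [this]
      exact (abs_add_le _ _).trans (add_le_add (ih p) (hMn p))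
    have hfn := hf _ hen p
    have key : e (n + 1) p - M (n + 1) p =
        (1 - α * d n p) * (e n p - M n p) + (α * d n p) * f n p
          + (-(α * (d n p - σ)) * M n p) + α * φ n p := by
      rw [he, hM]; ring
    have hαd : α * d n p ≤ 1 := by nlinarith
    have hd0 : 0 < d n p := by linarith
    have b1 : |(1 - α * d n p) * (e n p - M n p)| ≤ (1 - α * d n p) * (u + v) := by
      rw [abs_mul, abs_of_nonneg (by linarith)]
      exact mul_le_mul_of_nonneg_left (ih p) (by linarith)
    have b2 : |(α * d n p) * f n p| ≤ (α * d n p) * (γ * (u + v + m)) := by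
      rw [abs_mul, abs_of_nonneg (by positivity)]
      exact mul_le_mul_of_nonneg_left hfn (by positivity)
    have b3 : |-(α * (d n p - σ)) * M n p| ≤ (α * d n p) * m := by
      rw [abs_mul, abs_neg, abs_of_nonneg (mul_nonneg hα0.le (by linarith))]
      refine mul_le_mul ?_ (hMn p) (abs_nonneg _) (by positivity)
      exact mul_le_mul_of_nonneg_left (by linarith) hα0.le
    have b4 : |α * φ n p| ≤ α * (K / s) := by
      rw [abs_mul, abs_of_pos hα0]
      exact mul_le_mul_of_nonneg_left hφ hα0.le
    have hsum : |e (n + 1) p - M (n + 1) p| ≤ (1 - α * d n p) * (u + v)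
        + (α * d n p) * (γ * (u + v + m)) + (α * d n p) * m + α * (K / s) := by
      rw [key]
      refine (abs_add_le _ _).trans (add_le_add ((abs_add_le _ _).trans (add_le_add
        ((abs_add_le _ _).trans (add_le_add b1 b2)) b3)) b4)
    -- half of the contraction pays for the noise, the other half for the decrease of the bound
    have hq : 2 / s ≤ α * σ * (1 - γ) := by
      rw [hα, div_mul_eq_mul_div, div_mul_eq_mul_div]
      gcongr
      linarith
    have hKv : 2 * (K / s) ≤ σ * (1 - γ) * v := by
      rw [hv, ← mul_div_assoc, ← mul_div_assoc]; gcongr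
    have step1 : (1 - α * d n p) * (u + v)
        + (α * d n p) * (γ * (u + v + m)) + (α * d n p) * m + α * (K / s)
        ≤ (1 - 1 / s) * (u + v) := by
      have i0 : (1 + γ) * m ≤ (1 - γ) * u / 2 := by
        have := mul_le_mul_of_nonneg_right hγ1.le hm0
        linarith
      have i1 : (α * d n p) * ((1 + γ) * m) ≤ (α * d n p) * ((1 - γ) * u / 2) :=
        mul_le_mul_of_nonneg_left i0 (by positivity)
      have i2 : α * σ * ((1 - γ) * u / 2) ≤ α * d n p * ((1 - γ) * u / 2) := by
        gcongr
      have i3 : α * σ * ((1 - γ) * v) ≤ α * d n p * ((1 - γ) * v) := by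
        gcongr
      have i4 : α * (K / s) ≤ α * σ * ((1 - γ) * v) / 2 := by
        have := mul_le_mul_of_nonneg_left hKv hα0.le
        linarith
      have i5 : 2 / s * (u + v) ≤ α * σ * (1 - γ) * (u + v) := by gcongr
      have i6 : 2 / s = 2 * (1 / s) := by ring
      rw [i6] at i5
      clear_value u v m α s
      linarith
    refine hsum.trans (step1.trans ?_)
    have j1 := mul_le_mul_of_nonneg_left (sqrt_step hs1) (by positivity : 0 ≤ 4 * c / (1 - γ))
    have j2 := mul_le_mul_of_nonneg_left (inv_step hs1) hCb
    calc (1 - 1 / s) * (u + v) = 4 * c / (1 - γ) * ((1 - 1 / s) / √s)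
          + C_b * ((1 - 1 / s) / s) := by rw [hu, hv]; ring
      _ ≤ _ := add_le_add j1 j2
      _ = _ := by ring

/-! ### The Bellman operator and the Q-learning iterates -/

section Bellman
variable {S A : Type*} [Fintype A] [Nonempty A]

theorem abs_ciSup_sub_ciSup_le (f g : A → ℝ) (c : ℝ) (hfg : ∀ x, |f x - g x| ≤ c) :
    |(⨆ x, f x) - ⨆ x, g x| ≤ c := by
  have hf : BddAbove (Set.range f) := Set.finite_range f |>.bddAbove
  have hg : BddAbove (Set.range g) := Set.finite_range g |>.bddAbove
  have h1 : (⨆ x, f x) ≤ (⨆ x, g x) + c := ciSup_le fun x => by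
    linarith [le_ciSup hg x, (abs_le.mp (hfg x)).2]
  have h2 : (⨆ x, g x) ≤ (⨆ x, f x) + c := ciSup_le fun x => by
    linarith [le_ciSup hf x, (abs_le.mp (hfg x)).1]
  exact abs_le.2 ⟨by linarith, by linarith⟩

theorem abs_ciSup_le (f : A → ℝ) (c : ℝ) (hf : ∀ x, |f x| ≤ c) : |⨆ x, f x| ≤ c := by
  simpa using abs_ciSup_sub_ciSup_le f (fun _ => 0) c (by simpa using hf)

/-- The Bellman optimality operator. -/
noncomputable def bellman [Fintype S] (γ : ℝ) (P : S → A → S → ℝ) (R : S → A → ℝ) (q : S × A → ℝ)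
    (p : S × A) : ℝ :=
  R p.1 p.2 + γ * ∑ s', P p.1 p.2 s' * ⨆ b : A, q (s', b)

/-- The Bellman operator is a `γ`-contraction for the sup norm. -/
theorem abs_bellman_sub_le [Fintype S] {γ : ℝ} (hγ0 : 0 < γ) {P : S → A → S → ℝ}
    (hP0 : ∀ s a s', 0 ≤ P s a s') (hP1 : ∀ s a, ∑ s', P s a s' = 1) (R : S → A → ℝ)
    (q q' : S × A → ℝ) (c : ℝ) (hq : ∀ p, |q p - q' p| ≤ c) (p : S × A) :
    |bellman γ P R q p - bellman γ P R q' p| ≤ γ * c := by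
  have e : bellman γ P R q p - bellman γ P R q' p =
      γ * ∑ s', P p.1 p.2 s' * ((⨆ a' : A, q (s', a')) - ⨆ a' : A, q' (s', a')) := by
    simp only [bellman, mul_sub, sum_sub_distrib]; ring
  rw [e, abs_mul, abs_of_pos hγ0]
  refine mul_le_mul_of_nonneg_left ?_ hγ0.le
  calc _ ≤ ∑ s', |P p.1 p.2 s' * ((⨆ a' : A, q (s', a')) - ⨆ a' : A, q' (s', a'))| :=
        abs_sum_le_sum_abs _ _
    _ ≤ ∑ s', P p.1 p.2 s' * c := sum_le_sum fun s' _ => by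
        rw [abs_mul, abs_of_nonneg (hP0 _ _ _)]
        exact mul_le_mul_of_nonneg_left (abs_ciSup_sub_ciSup_le _ _ _ fun a' => hq _) (hP0 _ _ _)
    _ = c := by rw [← sum_mul, hP1, one_mul]

theorem abs_bellman_le [Fintype S] {γ : ℝ} (hγ0 : 0 < γ) {P : S → A → S → ℝ}
    (hP0 : ∀ s a s', 0 ≤ P s a s') (hP1 : ∀ s a, ∑ s', P s a s' = 1) {R : S → A → ℝ}
    {rbar : ℝ} (hR : ∀ s a, |R s a| ≤ rbar)
    (q : S × A → ℝ) (c : ℝ) (hq : ∀ p, |q p| ≤ c) (p : S × A) :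
    |bellman γ P R q p| ≤ rbar + γ * c := by
  have h0 : bellman γ P R (fun _ => 0) p = R p.1 p.2 := by simp [bellman]
  have h1 := abs_bellman_sub_le hγ0 hP0 hP1 R q (fun _ => 0) c (by simpa using hq) p
  have h2 := hR p.1 p.2
  rw [h0] at h1
  have : bellman γ P R q p = R p.1 p.2 + (bellman γ P R q p - R p.1 p.2) := by ring
  rw [this]
  exact (abs_add_le _ _).trans (add_le_add h2 h1)

theorem abs_fixedPoint_le [Fintype S] [Nonempty S] {γ : ℝ} (hγ0 : 0 < γ) (hγ1 : γ < 1)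
    {P : S → A → S → ℝ}
    (hP0 : ∀ s a s', 0 ≤ P s a s') (hP1 : ∀ s a, ∑ s', P s a s' = 1) {R : S → A → ℝ}
    {rbar : ℝ} (hR : ∀ s a, |R s a| ≤ rbar)
    (q : S × A → ℝ) (hq : ∀ p, q p = bellman γ P R q p) (p : S × A) :
    |q p| ≤ rbar / (1 - γ) := by
  obtain ⟨p₀, hp₀⟩ := Finite.exists_max fun p => |q p|
  have h1 := abs_bellman_le hγ0 hP0 hP1 hR q _ hp₀ p₀
  rw [← hq] at h1
  refine (hp₀ p).trans ?_
  rw [le_div_iff₀ (by linarith)]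
  linarith

/-- The bound `rbar / (1 - γ)` is preserved by the Q-learning target. -/
theorem abs_target_le {γ rbar : ℝ} (hγ0 : 0 < γ) (hγ1 : γ < 1) {x : ℝ} (hx : |x| ≤ rbar)
    (q : A → ℝ) (hq : ∀ a', |q a'| ≤ rbar / (1 - γ)) :
    |x + γ * ⨆ a', q a'| ≤ rbar / (1 - γ) := by
  have hx' : rbar + γ * (rbar / (1 - γ)) = rbar / (1 - γ) := by
    have : 1 - γ ≠ 0 := by linarith
    field_simp; ring
  rw [← hx']
  refine (abs_add_le _ _).trans (add_le_add hx ?_)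
  rw [abs_mul, abs_of_pos hγ0]
  exact mul_le_mul_of_nonneg_left (abs_ciSup_le _ _ hq) hγ0.le

theorem qlearning_path_bound [DecidableEq S] [DecidableEq A] {γ rbar : ℝ} (hγ0 : 0 < γ)
    (hγ1 : γ < 1) (hr0 : 0 ≤ rbar) (s : ℕ → S) (a : ℕ → A) (r : ℕ → ℝ)
    (hr : ∀ t, |r t| ≤ rbar) (α : ℕ → ℝ) (hα : ∀ t, α t ∈ Set.Ioc (0 : ℝ) 1)
    (Q : ℕ → S × A → ℝ) (hQ0 : Q 0 = 0)
    (hupd : ∀ t p, Q (t + 1) p =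
      if p = (s t, a t) then
        (1 - α t) * Q t p + α t * (r t + γ * ⨆ a' : A, Q t (s (t + 1), a'))
      else Q t p) :
    ∀ t p, |Q t p| ≤ rbar / (1 - γ) := by
  intro t
  induction t with
  | zero => intro p; simp only [hQ0, Pi.zero_apply, abs_zero]; exact div_nonneg hr0 (by linarith)
  | succ t ih =>
    intro p
    rw [hupd]
    obtain ⟨h0, h1⟩ := hα t
    split_ifs
    · have h3 : |r t + γ * ⨆ a' : A, Q t (s (t + 1), a')| ≤ rbar / (1 - γ) :=
        abs_target_le hγ0 hγ1 (hr t) _ fun a' => ih _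
      refine (abs_add_le _ _).trans ?_
      rw [abs_mul, abs_mul, abs_of_pos h0, abs_of_nonneg (by linarith : 0 ≤ 1 - α t)]
      have h4 := mul_le_mul_of_nonneg_left (ih p) (by linarith : 0 ≤ 1 - α t)
      have h5 := mul_le_mul_of_nonneg_left h3 h0.le
      linarith
    · exact ih p

/-- The iterates move slowly: by at most `2 * (rbar / (1 - γ)) * α n` in each step after time `n`. -/
theorem qlearning_drift [DecidableEq S] [DecidableEq A] {γ rbar : ℝ} (hγ0 : 0 < γ)
    (hγ1 : γ < 1) (hr0 : 0 ≤ rbar) (s : ℕ → S) (a : ℕ → A) (r : ℕ → ℝ)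
    (hr : ∀ t, |r t| ≤ rbar) (α : ℕ → ℝ) (hα : ∀ t, α t ∈ Set.Ioc (0 : ℝ) 1)
    (hanti : Antitone α)
    (Q : ℕ → S × A → ℝ) (hQ0 : Q 0 = 0)
    (hupd : ∀ t p, Q (t + 1) p =
      if p = (s t, a t) then
        (1 - α t) * Q t p + α t * (r t + γ * ⨆ a' : A, Q t (s (t + 1), a'))
      else Q t p) (n : ℕ) (p : S × A) (k : ℕ) :
    |Q (k + n) p - Q n p| ≤ k * (α n * (2 * (rbar / (1 - γ)))) := by
  have hb := qlearning_path_bound hγ0 hγ1 hr0 s a r hr α hα Q hQ0 hupd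
  have hx0 : 0 ≤ rbar / (1 - γ) := div_nonneg hr0 (by linarith)
  induction k with
  | zero => simp
  | succ k ih =>
    have hinc : |Q (k + n + 1) p - Q (k + n) p| ≤ α n * (2 * (rbar / (1 - γ))) := by
      rw [hupd]
      split_ifs
      · have e : (1 - α (k + n)) * Q (k + n) p + α (k + n) * (r (k + n) + γ * ⨆ a' : A,
            Q (k + n) (s (k + n + 1), a')) - Q (k + n) p = α (k + n) * ((r (k + n) + γ * ⨆ a' : A,
            Q (k + n) (s (k + n + 1), a')) - Q (k + n) p) := by ring
        rw [e, abs_mul, abs_of_pos (hα _).1]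
        refine mul_le_mul (hanti (by omega)) ?_ (abs_nonneg _) (hα _).1.le
        refine (abs_sub _ _).trans ?_
        have := abs_target_le hγ0 hγ1 (hr (k + n))
          (fun a' => Q (k + n) (s (k + n + 1), a')) (fun a' => hb _ _)
        linarith [hb (k + n) p]
      · simp only [sub_self, abs_zero]
        have := (hα n).1
        positivity
    have e : Q (k + 1 + n) p - Q n p
        = (Q (k + n + 1) p - Q (k + n) p) + (Q (k + n) p - Q n p) := by
      rw [show k + 1 + n = k + n + 1 by omega]; ring
    rw [e]
    refine (abs_add_le _ _).trans ?_
    push_cast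
    linarith
end Bellman

/-! ### The noise of Q-learning -/

section Noise
variable {Ω : Type*} {m0 : MeasurableSpace Ω} {μ : Measure Ω}

/-- A variable minus its conditional expectation is orthogonal to the bounded measurable
weights. -/
theorem integral_mul_sub_condExp [IsProbabilityMeasure μ] {m : MeasurableSpace Ω}
    (hm : m ≤ m0) {W f g : Ω → ℝ}
    (hW : StronglyMeasurable[m] W) (hWb : ∃ C : ℝ, ∀ᵐ ω ∂μ, |W ω| ≤ C)
    (hf : Integrable f μ) (hg : μ[f | m] =ᵐ[μ] g) :
    Integrable (fun ω => W ω * (f ω - g ω)) μ ∧ ∫ ω, W ω * (f ω - g ω) ∂μ = 0 := by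
  obtain ⟨C, hC⟩ := hWb
  have hgi : Integrable g μ := integrable_condExp.congr hg
  have hWm := (hW.mono hm).aestronglyMeasurable (μ := μ)
  have h1 : Integrable (fun ω => W ω * f ω) μ := hf.bdd_mul hWm hC
  have h2 : Integrable (fun ω => W ω * g ω) μ := hgi.bdd_mul hWm hC
  have e : (fun ω => W ω * (f ω - g ω)) = fun ω => W ω * f ω - W ω * g ω := by
    ext ω; ring
  rw [e]
  refine ⟨h1.sub h2, ?_⟩
  rw [integral_sub h1 h2, sub_eq_zero, ← integral_condExp hm]
  refine integral_congr_ae ?_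
  filter_upwards [condExp_mul_of_stronglyMeasurable_left hW h1 hf, hg] with ω h3 h4
  have : (fun ω => W ω * f ω) = W * f := rfl
  rw [this, h3, Pi.mul_apply, h4]

variable {S A : Type*} [DecidableEq S] [DecidableEq A]
  [MeasurableSpace S] [MeasurableSingletonClass S]
  [MeasurableSpace A] [MeasurableSingletonClass A]

theorem measurable_visit {m : MeasurableSpace Ω} {x : Ω → S × A} (hx : Measurable[m] x)
    (p : S × A) : Measurable[m] fun ω => if x ω = p then (1 : ℝ) else 0 :=
  Measurable.ite (hx (measurableSet_singleton p)) measurable_const measurable_const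

variable [Fintype S] [Fintype A]

theorem measurable_qlearning (ℱ : Filtration ℕ m0) (γ : ℝ)
    (s : ℕ → Ω → S) (a : ℕ → Ω → A) (r : ℕ → Ω → ℝ)
    (hsa_meas : ∀ t, Measurable[ℱ t] fun ω => (s t ω, a t ω))
    (hr_meas : ∀ t, Measurable[ℱ (t + 1)] (r t))
    (hs_meas : ∀ t, Measurable[ℱ (t + 1)] (s (t + 1)))
    (α : ℕ → ℝ) (Q : ℕ → Ω → S × A → ℝ) (hQ0 : ∀ ω, Q 0 ω = 0)
    (hupd : ∀ t ω p, Q (t + 1) ω p =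
      if p = (s t ω, a t ω) then
        (1 - α t) * Q t ω p + α t * (r t ω + γ * ⨆ a' : A, Q t ω (s (t + 1) ω, a'))
      else Q t ω p) :
    ∀ t p, Measurable[ℱ t] fun ω => Q t ω p := by
  intro t
  induction t with
  | zero => intro p; simp only [hQ0, Pi.zero_apply]; exact measurable_const
  | succ t ih =>
    intro p
    have ih' : ∀ p, Measurable[ℱ (t + 1)] fun ω => Q t ω p := fun p =>
      (ih p).mono (ℱ.mono (Nat.le_succ t)) le_rfl
    have hV : Measurable[ℱ (t + 1)] fun ω => ⨆ a' : A, Q t ω (s (t + 1) ω, a') := by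
      have e : (fun ω => ⨆ a' : A, Q t ω (s (t + 1) ω, a')) = fun ω =>
          ∑ s', if s (t + 1) ω = s' then ⨆ a' : A, Q t ω (s', a') else 0 := by
        ext ω; simp
      rw [e]
      refine Finset.measurable_fun_sum _ fun s' _ => ?_
      exact Measurable.ite (hs_meas t (measurableSet_singleton s'))
        (Measurable.iSup fun a' => ih' _) measurable_const
    simp only [hupd]
    refine Measurable.ite ?_ ?_ (ih' p)
    · have := ((hsa_meas t).mono (ℱ.mono (Nat.le_succ t)) le_rfl) (measurableSet_singleton p)
      convert this using 1
      ext ω; simp [eq_comm]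
    · exact ((ih' p).const_mul _).add (((hr_meas t).add (hV.const_mul γ)).const_mul _)

/-- The indicator of the event that the pair `p` is visited at time `t`. -/
noncomputable def visit (s : ℕ → Ω → S) (a : ℕ → Ω → A) (p : S × A) (t : ℕ) (ω : Ω) : ℝ :=
  if (s t ω, a t ω) = p then 1 else 0

/-- The conditional probability, given `ℱ n`, that `p` is visited at time `τ + n`. -/
noncomputable def visitProb (μ : Measure Ω) (ℱ : Filtration ℕ m0) (s : ℕ → Ω → S)
    (a : ℕ → Ω → A) (τ : ℕ) (p : S × A) (n : ℕ) : Ω → ℝ :=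
  μ[visit s a p (τ + n) | ℱ n]

/-- The noise in the update of `p` at time `τ + n`: the fluctuation of the visit indicator around its
conditional probability given `ℱ n`, weighted by the Bellman residual at time `n`, plus the
fluctuation of the observed target around the Bellman operator. -/
noncomputable def qNoise (μ : Measure Ω) (ℱ : Filtration ℕ m0) (γ : ℝ) (P : S → A → S → ℝ)
    (R : S → A → ℝ) (s : ℕ → Ω → S) (a : ℕ → Ω → A) (r : ℕ → Ω → ℝ)
    (Q : ℕ → Ω → S × A → ℝ) (τ : ℕ) (p : S × A) (n : ℕ) (ω : Ω) : ℝ :=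
  (visit s a p (τ + n) ω - visitProb μ ℱ s a τ p n ω) * (bellman γ P R (Q n ω) p - Q n ω p)
    + visit s a p (τ + n) ω * (r (τ + n) ω + γ * (⨆ a' : A, Q (τ + n) ω (s (τ + n + 1) ω, a'))
      - bellman γ P R (Q (τ + n) ω) p)

theorem qNoise_measurable (ℱ : Filtration ℕ m0) (γ : ℝ) (P : S → A → S → ℝ) (R : S → A → ℝ)
    (s : ℕ → Ω → S) (a : ℕ → Ω → A) (r : ℕ → Ω → ℝ)
    (hsa_meas : ∀ t, Measurable[ℱ t] fun ω => (s t ω, a t ω))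
    (hr_meas : ∀ t, Measurable[ℱ (t + 1)] (r t))
    (hs_meas : ∀ t, Measurable[ℱ (t + 1)] (s (t + 1)))
    (Q : ℕ → Ω → S × A → ℝ) (hQ : ∀ t p, Measurable[ℱ t] fun ω => Q t ω p)
    (τ : ℕ) (p : S × A) (n : ℕ) :
    StronglyMeasurable[ℱ (τ + n + 1)] (qNoise μ ℱ γ P R s a r Q τ p n) := by
  have hQ' : ∀ t ≤ τ + n + 1, ∀ p, Measurable[ℱ (τ + n + 1)] fun ω => Q t ω p := fun t ht p =>
    (hQ t p).mono (ℱ.mono ht) le_rfl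
  have hB : ∀ t ≤ τ + n + 1, Measurable[ℱ (τ + n + 1)] fun ω => bellman γ P R (Q t ω) p := by
    intro t ht
    simp only [bellman]
    exact measurable_const.add ((Finset.measurable_fun_sum _ fun s' _ =>
      (Measurable.iSup fun a' => hQ' t ht _).const_mul _).const_mul _)
  have hv : Measurable[ℱ (τ + n + 1)] (visit s a p (τ + n)) :=
    measurable_visit ((hsa_meas (τ + n)).mono (ℱ.mono (Nat.le_succ _)) le_rfl) p
  have hd : Measurable[ℱ (τ + n + 1)] (visitProb μ ℱ s a τ p n) :=
    (stronglyMeasurable_condExp.measurable).mono (ℱ.mono (by omega)) le_rfl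
  have hV : Measurable[ℱ (τ + n + 1)] fun ω => ⨆ a' : A, Q (τ + n) ω (s (τ + n + 1) ω, a') := by
    have e : (fun ω => ⨆ a' : A, Q (τ + n) ω (s (τ + n + 1) ω, a')) = fun ω =>
        ∑ s', if s (τ + n + 1) ω = s' then ⨆ a' : A, Q (τ + n) ω (s', a') else 0 := by
      ext ω; simp
    rw [e]
    refine Finset.measurable_fun_sum _ fun s' _ => ?_
    exact Measurable.ite (hs_meas _ (measurableSet_singleton s'))
      (Measurable.iSup fun a' => hQ' _ (by omega) _) measurable_const
  refine Measurable.stronglyMeasurable ?_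
  exact ((hv.sub hd).mul ((hB n (by omega)).sub (hQ' n (by omega) p))).add
    (hv.mul (((hr_meas _).add (hV.const_mul γ)).sub (hB _ (by omega))))

/-- The noise at time `τ + n` is centred given `ℱ n`. Freezing the Bellman residual at time `n` is
what makes this true for the first summand; the second one is even centred given `ℱ (τ + n)`. -/
theorem qNoise_orthogonal [IsProbabilityMeasure μ] [Nonempty A] (ℱ : Filtration ℕ m0)
    (γ : ℝ) (P : S → A → S → ℝ) (R : S → A → ℝ)
    (s : ℕ → Ω → S) (a : ℕ → Ω → A) (r : ℕ → Ω → ℝ) (x rbar : ℝ)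
    (hsa_meas : ∀ t, Measurable[ℱ t] fun ω => (s t ω, a t ω))
    (hr_meas : ∀ t, Measurable[ℱ (t + 1)] (r t))
    (hs_meas : ∀ t, Measurable[ℱ (t + 1)] (s (t + 1)))
    (hr_mean : ∀ t, μ[r t | ℱ t] =ᵐ[μ] fun ω => R (s t ω) (a t ω))
    (hs_dist : ∀ (t : ℕ) (s' : S),
      μ[(fun ω => if s (t + 1) ω = s' then (1 : ℝ) else 0) | ℱ t] =ᵐ[μ]
        fun ω => P (s t ω) (a t ω) s')
    (hr_bd : ∀ t, ∀ᵐ ω ∂μ, |r t ω| ≤ rbar)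
    (Q : ℕ → Ω → S × A → ℝ) (hQ : ∀ t p, Measurable[ℱ t] fun ω => Q t ω p)
    (hQb : ∀ᵐ ω ∂μ, ∀ t p, |Q t ω p| ≤ x)
    (hBb : ∀ᵐ ω ∂μ, ∀ t p, |bellman γ P R (Q t ω) p| ≤ x)
    (τ : ℕ) (p : S × A) (n : ℕ) (W : Ω → ℝ) (hW : StronglyMeasurable[ℱ n] W)
    (hWb : ∃ C : ℝ, ∀ᵐ ω ∂μ, |W ω| ≤ C) :
    ∫ ω, W ω * qNoise μ ℱ γ P R s a r Q τ p n ω ∂μ = 0 := by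
  obtain ⟨C, hC⟩ := hWb
  have hWt : Measurable[ℱ (τ + n)] W := hW.measurable.mono (ℱ.mono (by omega)) le_rfl
  have hv : Measurable[ℱ (τ + n)] (visit s a p (τ + n)) := measurable_visit (hsa_meas (τ + n)) p
  have hv1 : ∀ ω, |visit s a p (τ + n) ω| ≤ 1 := fun ω => by
    simp only [visit]; split_ifs <;> simp
  have hB : Measurable[ℱ n] fun ω => bellman γ P R (Q n ω) p := by
    simp only [bellman]
    exact measurable_const.add ((Finset.measurable_fun_sum _ fun s' _ =>
      (Measurable.iSup fun a' => hQ n _).const_mul _).const_mul _)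
  obtain ⟨i1, z1⟩ := integral_mul_sub_condExp (μ := μ) (ℱ.le n)
    (W := fun ω => W ω * (bellman γ P R (Q n ω) p - Q n ω p))
    (f := visit s a p (τ + n)) (g := visitProb μ ℱ s a τ p n)
    (hW.mul (hB.sub (hQ n p)).stronglyMeasurable)
    ⟨C * (x + x), by
      filter_upwards [hC, hQb, hBb] with ω h1 h2 h3
      rw [abs_mul]
      exact mul_le_mul h1 ((abs_sub _ _).trans (add_le_add (h3 n p) (h2 n p))) (abs_nonneg _)
        ((abs_nonneg _).trans h1)⟩
    (Integrable.of_bound (hv.mono (ℱ.le _) le_rfl).aestronglyMeasurable 1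
      (Filter.Eventually.of_forall hv1)) (Filter.EventuallyEq.refl _ _)
  obtain ⟨i2, z2⟩ := integral_mul_sub_condExp (μ := μ) (ℱ.le (τ + n))
    (W := fun ω => W ω * visit s a p (τ + n) ω)
    (hWt.mul hv).stronglyMeasurable
    ⟨C * 1, by
      filter_upwards [hC] with ω h1
      rw [abs_mul]
      exact mul_le_mul h1 (hv1 ω) (abs_nonneg _) ((abs_nonneg _).trans h1)⟩
    (Integrable.of_bound ((hr_meas (τ + n)).mono (ℱ.le _) le_rfl).aestronglyMeasurable rbar
      (hr_bd (τ + n))) (hr_mean (τ + n))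
  -- the value at the next state is expanded over the possible next states, so that the
  -- conditional distribution is applied against `ℱ (τ + n)`-measurable coefficients
  have h3 := fun s' => integral_mul_sub_condExp (μ := μ) (ℱ.le (τ + n))
    (W := fun ω => W ω * visit s a p (τ + n) ω * (γ * ⨆ a' : A, Q (τ + n) ω (s', a')))
    ((hWt.mul hv).mul ((Measurable.iSup fun a' =>
      hQ (τ + n) (s', a')).const_mul γ)).stronglyMeasurable
    ⟨C * 1 * (|γ| * x), by
      filter_upwards [hC, hQb] with ω h1 h2
      have hC0 := (abs_nonneg _).trans h1
      have hs := abs_ciSup_le (fun a' => Q (τ + n) ω (s', a')) x fun a' => h2 _ _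
      rw [abs_mul, abs_mul, abs_mul]
      exact mul_le_mul (mul_le_mul h1 (hv1 ω) (abs_nonneg _) hC0)
        (mul_le_mul_of_nonneg_left hs (abs_nonneg _)) (by positivity) (by positivity)⟩
    (Integrable.of_bound (f := fun ω => if s (τ + n + 1) ω = s' then (1 : ℝ) else 0)
      ((Measurable.ite (hs_meas (τ + n) (measurableSet_singleton s'))
        measurable_const measurable_const).mono (ℱ.le _) le_rfl).aestronglyMeasurable 1
      (Filter.Eventually.of_forall fun ω => by split_ifs <;> simp)) (hs_dist (τ + n) s')
  have e : ∀ ω, W ω * qNoise μ ℱ γ P R s a r Q τ p n ω =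
      (W ω * (bellman γ P R (Q n ω) p - Q n ω p)
          * (visit s a p (τ + n) ω - visitProb μ ℱ s a τ p n ω)
        + W ω * visit s a p (τ + n) ω * (r (τ + n) ω - R (s (τ + n) ω) (a (τ + n) ω)))
      + ∑ s', W ω * visit s a p (τ + n) ω * (γ * ⨆ a' : A, Q (τ + n) ω (s', a')) *
          ((if s (τ + n + 1) ω = s' then (1 : ℝ) else 0) - P (s (τ + n) ω) (a (τ + n) ω) s') := by
    intro ω
    have e1 : ∑ s', W ω * visit s a p (τ + n) ω * (γ * ⨆ a' : A, Q (τ + n) ω (s', a')) *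
          ((if s (τ + n + 1) ω = s' then (1 : ℝ) else 0) - P (s (τ + n) ω) (a (τ + n) ω) s') =
        W ω * visit s a p (τ + n) ω * (γ * ((⨆ a' : A, Q (τ + n) ω (s (τ + n + 1) ω, a')) -
          ∑ s', P (s (τ + n) ω) (a (τ + n) ω) s' * ⨆ a' : A, Q (τ + n) ω (s', a'))) := by
      have : (⨆ a' : A, Q (τ + n) ω (s (τ + n + 1) ω, a')) =
          ∑ s', (if s (τ + n + 1) ω = s' then (1 : ℝ) else 0) *
            ⨆ a' : A, Q (τ + n) ω (s', a') := by simp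
      rw [this, ← sum_sub_distrib, mul_sum, mul_sum]
      refine sum_congr rfl fun s' _ => by ring
    rw [e1]
    by_cases hp : (s (τ + n) ω, a (τ + n) ω) = p
    · -- at a visit, `p` is the current pair, and the reward and transition data at `p` are met
      subst hp
      simp only [qNoise, bellman]; ring
    · have : visit s a p (τ + n) ω = 0 := if_neg hp
      simp only [qNoise, this]; ring
  simp only [e]
  refine (integral_add (i1.add i2) (integrable_finsetSum _ fun s' _ => (h3 s').1)).trans ?_
  refine (congrArg₂ _ (integral_add i1 i2) (integral_finsetSum _ fun s' _ => (h3 s').1)).trans ?_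
  rw [z1, z2]
  simp [fun s' => (h3 s').2]

end Noise

/-! ### The error along one trajectory -/

/-- The error of Q-learning along a fixed trajectory, given a bound on the accumulated noise `M`.
The recursion is started at time `τ`, where the error is at most `2 * rbar / (1 - γ)`. -/
theorem qlearning_error_path {S A : Type*} [Fintype S] [Fintype A] [Nonempty S] [Nonempty A]
    [DecidableEq S] [DecidableEq A]
    (γ : ℝ) (hγ0 : 0 < γ) (hγ1 : γ < 1)
    (P : S → A → S → ℝ) (hP0 : ∀ s a s', 0 ≤ P s a s') (hP1 : ∀ s a, ∑ s', P s a s' = 1)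
    (R : S → A → ℝ) (rbar : ℝ) (hR : ∀ s a, |R s a| ≤ rbar) (hr0 : 0 ≤ rbar)
    (Qstar : S × A → ℝ) (hfix : ∀ p, Qstar p = bellman γ P R Qstar p)
    (s : ℕ → S) (a : ℕ → A) (r : ℕ → ℝ) (hr : ∀ t, |r t| ≤ rbar)
    (μmin : ℝ) (hμmin0 : 0 < μmin) (τ : ℕ)
    (α : ℕ → ℝ) (hα : ∀ t, α t ∈ Set.Ioc (0 : ℝ) 1)
    (h t0 : ℝ) (hh1 : 1 ≤ h) (ht0 : 4 * h ≤ t0) (ht0τ : (τ : ℝ) ≤ t0)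
    (hc : 2 ≤ μmin / 2 * h * (1 - γ))
    (hstep : ∀ t, α t = h / ((t : ℝ) + t0))
    (Q : ℕ → S × A → ℝ) (hQ0 : Q 0 = 0)
    (hupd : ∀ t p, Q (t + 1) p =
      if p = (s t, a t) then
        (1 - α t) * Q t p + α t * (r t + γ * ⨆ a' : A, Q t (s (t + 1), a'))
      else Q t p)
    (d : ℕ → S × A → ℝ) (hd : ∀ n p, μmin / 2 ≤ d n p ∧ d n p ≤ 1)
    (ε M : ℕ → S × A → ℝ)
    (hε : ∀ n p, ε n p =
      ((if (s (τ + n), a (τ + n)) = p then 1 else 0) - d n p) * (bellman γ P R (Q n) p - Q n p)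
        + (if (s (τ + n), a (τ + n)) = p then 1 else 0)
          * (r (τ + n) + γ * (⨆ a' : A, Q (τ + n) (s (τ + n + 1), a'))
            - bellman γ P R (Q (τ + n)) p))
    (hM0 : ∀ p, M 0 p = 0)
    (hM : ∀ n p, M (n + 1) p = (1 - h / (τ + t0 + n) * (μmin / 2)) * M n p
      + h / (τ + t0 + n) * ε n p)
    (N : ℕ) (c : ℝ) (hc0 : 0 ≤ c) (hMb : ∀ n ≤ N, ∀ p, |M n p| ≤ c / √(τ + t0 + n))
    (p : S × A) :
    |Q (τ + N) p - Qstar p| ≤ (5 * c / (1 - γ)) / √(τ + t0 + N) +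
      (4 * rbar / (1 - γ) ^ 2 * max (160 * h * (τ : ℝ) / μmin) (2 * ((τ : ℝ) + t0)))
        / (τ + t0 + N) := by
  have hγ : 0 < 1 - γ := by linarith
  have hτ0 : (0 : ℝ) ≤ τ := Nat.cast_nonneg τ
  set x := rbar / (1 - γ) with hx
  have hx0 : 0 ≤ x := by positivity
  have hQb := qlearning_path_bound hγ0 hγ1 hr0 s a r hr α hα Q hQ0 hupd
  have hQs := abs_fixedPoint_le hγ0 hγ1 hP0 hP1 hR Qstar hfix
  set Mx := max (160 * h * (τ : ℝ) / μmin) (2 * ((τ : ℝ) + t0)) with hMx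
  have hMx1 : 160 * h * (τ : ℝ) / μmin ≤ Mx := le_max_left _ _
  have hMx2 : 2 * ((τ : ℝ) + t0) ≤ Mx := le_max_right _ _
  have hMx0 : 0 ≤ Mx := by linarith
  have hCb : 4 * rbar / (1 - γ) ^ 2 * Mx = 4 * x * Mx / (1 - γ) := by
    rw [hx]; field_simp
  rw [hCb]
  have hanti : Antitone α := by
    intro m n hmn
    rw [hstep, hstep]
    have : (m : ℝ) ≤ n := by exact_mod_cast hmn
    have hm : (0 : ℝ) ≤ m := Nat.cast_nonneg m
    exact div_le_div_of_nonneg_left (by linarith) (by linarith) (by linarith)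
  have hstep' : ∀ n : ℕ, α (τ + n) = h / (τ + t0 + n) := fun n => by
    rw [hstep]; push_cast; congr 1; ring
  have hmain := error_recursion N γ (μmin / 2) h (τ + t0) c (4 * x * Mx / (1 - γ))
    (8 * x * τ * h) hγ0 hγ1 (by positivity) hc (by linarith) (by linarith) hc0
    (by
      have e : μmin / 2 * (1 - γ) * (4 * x * Mx / (1 - γ)) = 2 * x * (μmin * Mx) := by
        field_simp; ring
      rw [e]
      rw [div_le_iff₀ hμmin0] at hMx1
      have hτh : 0 ≤ τ * h := by positivity
      have : 8 * (τ * h) ≤ μmin * Mx := by linarith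
      have := mul_le_mul_of_nonneg_left this (by positivity : 0 ≤ 2 * x)
      linarith)
    (by positivity)
    (fun n p => Q (τ + n) p - Qstar p) M d
    (fun n p => bellman γ P R (Q (τ + n)) p - Qstar p) ε
    -- the error made by evaluating the Bellman residual at time `n` instead of `τ + n`
    (fun n p => ((if (s (τ + n), a (τ + n)) = p then 1 else 0) - d n p) *
      ((bellman γ P R (Q (τ + n)) p - Q (τ + n) p) - (bellman γ P R (Q n) p - Q n p)))
    (by
      intro n p
      rw [← hstep', ← add_assoc, hupd, hε]
      by_cases hp : p = (s (τ + n), a (τ + n))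
      · rw [if_pos hp, if_pos hp.symm]; ring
      · rw [if_neg hp, if_neg (Ne.symm hp)]; ring)
    (by
      intro n C hC p
      have := abs_bellman_sub_le hγ0 hP0 hP1 R _ _ C hC p
      rwa [← hfix] at this)
    hM0 hM hd
    (by
      intro n p
      have hn : (0 : ℝ) ≤ n := Nat.cast_nonneg n
      have hdrift : ∀ p, |Q (τ + n) p - Q n p| ≤ τ * (α n * (2 * x)) := fun p =>
        qlearning_drift hγ0 hγ1 hr0 s a r hr α hα hanti Q hQ0 hupd n p τ
      have h1 := abs_bellman_sub_le hγ0 hP0 hP1 R _ _ _ hdrift p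
      have h2 := hdrift p
      obtain ⟨hd1, hd2⟩ := hd n p
      have hA : |(if (s (τ + n), a (τ + n)) = p then (1 : ℝ) else 0) - d n p| ≤ 1 := by
        split_ifs <;> rw [abs_le] <;> constructor <;> linarith
      have hα0 := (hα n).1
      have hY0 : 0 ≤ τ * (α n * (2 * x)) := by positivity
      have hB : |(bellman γ P R (Q (τ + n)) p - Q (τ + n) p) - (bellman γ P R (Q n) p - Q n p)|
          ≤ 2 * (τ * (α n * (2 * x))) := by
        have e : (bellman γ P R (Q (τ + n)) p - Q (τ + n) p) - (bellman γ P R (Q n) p - Q n p) =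
          (bellman γ P R (Q (τ + n)) p - bellman γ P R (Q n) p) - (Q (τ + n) p - Q n p) := by ring
        rw [e]
        refine (abs_sub _ _).trans ?_
        have := mul_le_mul_of_nonneg_right hγ1.le hY0
        linarith
      -- `τ ≤ t0`, so the step sizes at times `n` and `τ + n` differ by a factor of at most `2`
      have hαn : α n ≤ 2 * h / (τ + t0 + n) := by
        rw [hstep, div_le_div_iff₀ (by linarith) (by linarith)]
        have : h * (τ + t0 + n) ≤ h * (2 * (n + t0)) :=
          mul_le_mul_of_nonneg_left (by linarith) (by linarith)
        linarith
      rw [abs_mul]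
      calc _ ≤ 1 * (2 * (τ * (α n * (2 * x)))) := mul_le_mul hA hB (abs_nonneg _) zero_le_one
        _ = 4 * x * τ * α n := by ring
        _ ≤ 4 * x * τ * (2 * h / (τ + t0 + n)) :=
          mul_le_mul_of_nonneg_left hαn (by positivity)
        _ = _ := by ring)
    hMb
    (by
      intro p
      refine (abs_sub _ _).trans ((add_le_add (hQb _ p) (hQs p)).trans ?_)
      rw [le_div_iff₀ (by linarith), le_div_iff₀ hγ]
      have i1 := mul_le_mul_of_nonneg_left hMx2 hx0
      have i2 : 0 ≤ x * (τ + t0) := mul_nonneg hx0 (by linarith)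
      have i3 := mul_le_mul_of_nonneg_left (by linarith : 1 - γ ≤ 1) i2
      linarith)
    N le_rfl p
  have hMN := hMb N le_rfl p
  have hsplit : Q (τ + N) p - Qstar p = (Q (τ + N) p - Qstar p - M N p) + M N p := by ring
  rw [hsplit]
  refine (abs_add_le _ _).trans ((add_le_add hmain hMN).trans ?_)
  have hcc : c / √(τ + t0 + N) ≤ c / (1 - γ) / √(τ + t0 + N) := by
    have : c ≤ c / (1 - γ) := le_div_self hc0 hγ (by linarith)
    gcongr
  have e : 5 * c / (1 - γ) / √(τ + t0 + N) = 4 * c / (1 - γ) / √(τ + t0 + N)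
      + c / (1 - γ) / √(τ + t0 + N) := by ring
  linarith

/-! ### The union bound -/

/-- The Chernoff bound with variance proxy `B` and exponent `D`, at its optimal parameter
`√(2 * D / B)`. -/
theorem le_sqrt_of_chernoff {B D y : ℝ} (hB : 0 < B) (hD : 0 < D)
    (hy : √(2 * D / B) * y ≤ √(2 * D / B) ^ 2 * B / 2 + D) : y ≤ √(2 * D * B) := by
  have hθ : 0 < √(2 * D / B) := by positivity
  rw [Real.sq_sqrt (by positivity)] at hy
  have e1 : 2 * D / B * B / 2 + D = 2 * D := by field_simp; ring
  have e2 : √(2 * D / B) * √(2 * D * B) = 2 * D := by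
    rw [← Real.sqrt_mul (by positivity)]
    have : 2 * D / B * (2 * D * B) = (2 * D) ^ 2 := by field_simp
    rw [this, Real.sqrt_sq (by positivity)]
  exact le_of_mul_le_mul_left (hy.trans (e1.trans e2.symm).le) hθ

/-- Outside an event of small probability the accumulated noise is bounded for all indices `p` and
all times below `T`. The parameter `θ` does not depend on the residue class, so only the sum of the
variance proxies over the classes matters. -/
theorem noise_uniform_bound {Ω ι : Type*} [Fintype ι] {m0 : MeasurableSpace Ω} {μ : Measure Ω}
    [IsProbabilityMeasure μ] (ℱ : Filtration ℕ m0) (τ : ℕ) (ρ c : ℕ → ℝ) (b : ℝ)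
    (ε : ι → ℕ → Ω → ℝ) (hmeas : ∀ p n, StronglyMeasurable[ℱ (τ + n + 1)] (ε p n))
    (hbd : ∀ p n, ∀ᵐ ω ∂μ, |ε p n ω| ≤ b)
    (horth : ∀ p n, ∀ W : Ω → ℝ, StronglyMeasurable[ℱ n] W →
      (∃ C : ℝ, ∀ᵐ ω ∂μ, |W ω| ≤ C) → ∫ ω, W ω * ε p n ω ∂μ = 0)
    (B : ℕ → ℝ) (hB : ∀ n, 0 < B n)
    (hV : ∀ n, ∑ j ∈ range (τ + 1), varClass τ j ρ c b n ≤ B n)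
    (L : ℝ) (hL : 0 < L) (T : ℕ) :
    ∃ bad : Set Ω,
      μ bad ≤ ENNReal.ofReal ((Fintype.card ι * (T * ((τ + 1) * 2))) * Real.exp (-L)) ∧
      ∀ ω ∉ bad, ∀ p, ∀ n < T,
        |∑ j ∈ range (τ + 1), noiseClass τ j ρ c (fun k => ε p k ω) n| ≤
          √(2 * (((τ : ℝ) + 1) * L) * B n) := by
  have hD : 0 < ((τ : ℝ) + 1) * L := by positivity
  -- the parameter optimizing the Chernoff bound, with both signs
  let θ : ℕ → Bool → ℝ := fun n sgn =>
    if sgn then √(2 * (((τ : ℝ) + 1) * L) / B n) else -√(2 * (((τ : ℝ) + 1) * L) / B n)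
  let bad : ι × Fin T × Fin (τ + 1) × Bool → Set Ω := fun i =>
    {ω | θ i.2.1 i.2.2.2 ^ 2 * varClass τ i.2.2.1 ρ c b i.2.1 / 2 + L ≤
      θ i.2.1 i.2.2.2 * noiseClass τ i.2.2.1 ρ c (fun k => ε i.1 k ω) i.2.1}
  have hbad : ∀ i, μ (bad i) ≤ ENNReal.ofReal (Real.exp (-L)) := fun i =>
    noiseClass_tail ℱ τ i.2.2.1 ρ c b (ε i.1) (hmeas i.1) (hbd i.1) (horth i.1) i.2.1
      (θ i.2.1 i.2.2.2) L
  refine ⟨⋃ i, bad i, ?_, ?_⟩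
  · refine (measure_iUnion_le _).trans ?_
    rw [tsum_fintype]
    refine (sum_le_sum fun i _ => hbad i).trans (le_of_eq ?_)
    rw [sum_const, nsmul_eq_mul, ← ENNReal.ofReal_natCast,
      ← ENNReal.ofReal_mul (Nat.cast_nonneg _)]
    simp only [card_univ, Fintype.card_prod, Fintype.card_fin, Fintype.card_bool]
    push_cast
    rfl
  · intro ω hω p n hn
    simp only [Set.mem_iUnion, not_exists] at hω
    have hone : ∀ sgn : Bool, θ n sgn *
        ∑ j ∈ range (τ + 1), noiseClass τ j ρ c (fun k => ε p k ω) n ≤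
        √(2 * (((τ : ℝ) + 1) * L) / B n) ^ 2 * B n / 2 + ((τ : ℝ) + 1) * L := by
      intro sgn
      have hsq : θ n sgn ^ 2 = √(2 * (((τ : ℝ) + 1) * L) / B n) ^ 2 := by
        cases sgn <;> simp [θ]
      have hj : ∀ j ∈ range (τ + 1), θ n sgn * noiseClass τ j ρ c (fun k => ε p k ω) n ≤
          θ n sgn ^ 2 * varClass τ j ρ c b n / 2 + L := fun j hj =>
        (not_le.1 (hω (p, ⟨n, hn⟩, ⟨j, mem_range.1 hj⟩, sgn))).le
      rw [mul_sum]
      refine (sum_le_sum hj).trans ?_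
      rw [sum_add_distrib, ← sum_div, ← mul_sum, sum_const, card_range, nsmul_eq_mul, hsq]
      push_cast
      have := mul_le_mul_of_nonneg_left (hV n)
        (sq_nonneg (√(2 * (((τ : ℝ) + 1) * L) / B n)))
      linarith
    have hpos := le_sqrt_of_chernoff (hB n) hD (by simpa [θ] using hone true)
    have hneg := le_sqrt_of_chernoff (hB n) hD
      (y := -∑ j ∈ range (τ + 1), noiseClass τ j ρ c (fun k => ε p k ω) n)
      (by simpa [θ] using hone false)
    exact abs_le'.2 ⟨hpos, hneg⟩

/-! ### The finite-time bound -/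

/-- **Theorem 2 (finite-time bound for asynchronous Q-learning).**
For asynchronous Q-learning on a single trajectory of a `γ`-discounted MDP with bounded
rewards, sufficient exploration (with parameters `μ_min`, `t_mix`,
`τ = ⌈log₂(2/μ_min)⌉·t_mix`), and rescaled linear step size `α_t = h/(t+t₀)` with
`t₀ ≥ max(4h, τ)` and `h ≥ 4/(μ_min(1-γ))`, for every `T ≥ τ` and `δ ∈ (0,1)`, with
probability at least `1-δ`,
`‖Q(T) - Q*‖_∞ ≤ (60r̄/(1-γ)²)·√(2(τ+1)h/μ_min)·√(log(2(τ+1)T²|S||A|/δ)/(T+t₀))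
   + (4r̄/(1-γ)²)·max(160hτ/μ_min, 2(τ+t₀))·1/(T+t₀)`. -/
theorem asynchronous_Q_learning_finite_time_bound
    {Ω : Type*} {m0 : MeasurableSpace Ω} (μ : Measure Ω) [IsProbabilityMeasure μ]
    (ℱ : Filtration ℕ m0)
    (S A : Type*) [Fintype S] [Fintype A] [Nonempty S] [Nonempty A]
    [DecidableEq S] [DecidableEq A]
    [MeasurableSpace S] [MeasurableSingletonClass S]
    [MeasurableSpace A] [MeasurableSingletonClass A]
    (γ : ℝ) (hγ0 : 0 < γ) (hγ1 : γ < 1)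
    -- transition probabilities and mean rewards
    (P : S → A → S → ℝ) (hP0 : ∀ s a s', 0 ≤ P s a s') (hP1 : ∀ s a, ∑ s', P s a s' = 1)
    (R : S → A → ℝ) (rbar : ℝ) (hR : ∀ s a, |R s a| ≤ rbar)
    -- the optimal Q-function: unique fixed point of the Bellman optimality operator
    (Qstar : S × A → ℝ)
    (hfix : ∀ p : S × A,
      Qstar p = R p.1 p.2 + γ * ∑ s', P p.1 p.2 s' * ⨆ a' : A, Qstar (s', a'))
    -- the trajectory, adapted to the filtration
    (s : ℕ → Ω → S) (a : ℕ → Ω → A) (r : ℕ → Ω → ℝ)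
    (hsa_meas : ∀ t, Measurable[ℱ t] fun ω => (s t ω, a t ω))
    (hr_meas : ∀ t, Measurable[ℱ (t + 1)] (r t))
    (hs_meas : ∀ t, Measurable[ℱ (t + 1)] (s (t + 1)))
    -- conditionally on `ℱ_t`: the reward has mean `r_{s_t,a_t}`, the next state has
    -- distribution `P(·|s_t,a_t)`, and they are conditionally independent
    (hr_mean : ∀ t, μ[r t | ℱ t] =ᵐ[μ] fun ω => R (s t ω) (a t ω))
    (hs_dist : ∀ (t : ℕ) (s' : S),
      μ[(fun ω => if s (t + 1) ω = s' then (1 : ℝ) else 0) | ℱ t] =ᵐ[μ]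
        fun ω => P (s t ω) (a t ω) s')
    (hindep : ∀ (t : ℕ) (g : S → ℝ),
      μ[(fun ω => r t ω * g (s (t + 1) ω)) | ℱ t] =ᵐ[μ]
        fun ω => (μ[r t | ℱ t]) ω * (μ[(fun ω' => g (s (t + 1) ω')) | ℱ t]) ω)
    -- bounded rewards
    (hr_bd : ∀ t, ∀ᵐ ω ∂μ, |r t ω| ≤ rbar)
    -- exploration: `τ = ⌈log₂(2/μ_min)⌉ t_mix` and
    -- `P((s_t,a_t) = (s,a) | ℱ_{t-τ}) ≥ μ_min/2` a.s. for `t ≥ τ`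
    (μmin : ℝ) (hμmin0 : 0 < μmin) (hμmin1 : μmin < 1)
    (tmix : ℕ) (htmix : 0 < tmix) (τ : ℕ)
    (hτ : τ = ⌈Real.logb 2 (2 / μmin)⌉₊ * tmix)
    (hexpl : ∀ (p : S × A) (t : ℕ), τ ≤ t →
      ∀ᵐ ω ∂μ, μmin / 2 ≤
        (μ[(fun ω' => if (s t ω', a t ω') = p then (1 : ℝ) else 0) | ℱ (t - τ)]) ω)
    -- step sizes
    (α : ℕ → ℝ) (hα : ∀ t, α t ∈ Set.Ioc (0 : ℝ) 1)
    (h t0 : ℝ) (ht0 : max (4 * h) (τ : ℝ) ≤ t0) (hh : 4 / (μmin * (1 - γ)) ≤ h)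
    (hstep : ∀ t, α t = h / ((t : ℝ) + t0))
    -- the asynchronous Q-learning iterates
    (Q : ℕ → Ω → S × A → ℝ) (hQ0 : ∀ ω, Q 0 ω = 0)
    (hupd : ∀ t ω p, Q (t + 1) ω p =
      if p = (s t ω, a t ω) then
        (1 - α t) * Q t ω p + α t * (r t ω + γ * ⨆ a' : A, Q t ω (s (t + 1) ω, a'))
      else Q t ω p)
    -- horizon and confidence level
    (T : ℕ) (hT : τ ≤ T) (δ : ℝ) (hδ0 : 0 < δ) (hδ1 : δ < 1) :
    ENNReal.ofReal (1 - δ) ≤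
      μ {ω | (⨆ p : S × A, |Q T ω p - Qstar p|) ≤
        (60 * rbar / (1 - γ) ^ 2) * Real.sqrt (2 * ((τ : ℝ) + 1) * h / μmin) *
          Real.sqrt (Real.log (2 * ((τ : ℝ) + 1) * (T : ℝ) ^ 2 *
            (Fintype.card S : ℝ) * (Fintype.card A : ℝ) / δ) / ((T : ℝ) + t0)) +
        (4 * rbar / (1 - γ) ^ 2) *
          max (160 * h * (τ : ℝ) / μmin) (2 * ((τ : ℝ) + t0)) * (1 / ((T : ℝ) + t0))} := by
  have hγ : 0 < 1 - γ := by linarith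
  have hr0 : 0 ≤ rbar := (abs_nonneg _).trans (hR (Classical.arbitrary S) (Classical.arbitrary A))
  have hfix' : ∀ p, Qstar p = bellman γ P R Qstar p := hfix
  have hQs := abs_fixedPoint_le hγ0 hγ1 hP0 hP1 hR Qstar hfix'
  have ht04 : 4 * h ≤ t0 := (le_max_left _ _).trans ht0
  have ht0τ : (τ : ℝ) ≤ t0 := (le_max_right _ _).trans ht0
  have hμγ : 0 < μmin * (1 - γ) := mul_pos hμmin0 hγ
  have hh4 : 4 ≤ h * (μmin * (1 - γ)) := (div_le_iff₀ hμγ).1 hh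
  have hc : 2 ≤ μmin / 2 * h * (1 - γ) := by linarith
  have hhpos : 0 < h := lt_of_lt_of_le (by positivity) hh
  have hh1 : 1 ≤ h := by
    have : h * (μmin * (1 - γ)) ≤ h * 1 :=
      mul_le_mul_of_nonneg_left (by nlinarith) hhpos.le
    linarith
  have hτpos : 1 ≤ τ := by
    have h1 : 0 < Real.logb 2 (2 / μmin) :=
      Real.logb_pos (by norm_num) (by rw [lt_div_iff₀ hμmin0]; linarith)
    have h2 := Nat.ceil_pos.2 h1
    rw [hτ]
    exact Nat.mul_pos h2 htmix
  have hτ0 : (0 : ℝ) ≤ τ := Nat.cast_nonneg τ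
  have hr_all : ∀ᵐ ω ∂μ, ∀ t, |r t ω| ≤ rbar := ae_all_iff.2 hr_bd
  have hx_eq : rbar + γ * (rbar / (1 - γ)) = rbar / (1 - γ) := by
    field_simp; ring
  have hQb : ∀ᵐ ω ∂μ, ∀ t p, |Q t ω p| ≤ rbar / (1 - γ) := by
    filter_upwards [hr_all] with ω hω
    exact qlearning_path_bound hγ0 hγ1 hr0 (fun t => s t ω) (fun t => a t ω) (fun t => r t ω)
      hω α hα (fun t => Q t ω) (hQ0 ω) (fun t p => hupd t ω p)
  rcases hr0.eq_or_lt with hrz | hrpos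
  · -- for `rbar = 0` all the quantities involved vanish almost surely
    have h1 : ∀ᵐ ω ∂μ, (⨆ p : S × A, |Q T ω p - Qstar p|) ≤
        (60 * rbar / (1 - γ) ^ 2) * Real.sqrt (2 * ((τ : ℝ) + 1) * h / μmin) *
          Real.sqrt (Real.log (2 * ((τ : ℝ) + 1) * (T : ℝ) ^ 2 *
            (Fintype.card S : ℝ) * (Fintype.card A : ℝ) / δ) / ((T : ℝ) + t0)) +
        (4 * rbar / (1 - γ) ^ 2) *
          max (160 * h * (τ : ℝ) / μmin) (2 * ((τ : ℝ) + t0)) * (1 / ((T : ℝ) + t0)) := by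
      filter_upwards [hQb] with ω hω
      rw [← hrz] at hω hQs
      simp only [zero_div] at hω hQs
      rw [← hrz]
      simp only [mul_zero, zero_div, zero_mul, add_zero]
      refine ciSup_le fun p => (abs_sub _ _).trans ?_
      linarith [hω T p, hQs p]
    have h2 := measure_mono_ae (μ := μ) (s := Set.univ) (h1.mono fun ω hω _ => hω)
    rw [measure_univ] at h2
    exact (ENNReal.ofReal_le_one.2 (by linarith)).trans h2
  have hBb : ∀ᵐ ω ∂μ, ∀ t p, |bellman γ P R (Q t ω) p| ≤ rbar / (1 - γ) := by
    filter_upwards [hQb] with ω hω t p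
    rw [← hx_eq]
    exact abs_bellman_le hγ0 hP0 hP1 hR _ _ (hω t) p
  set x := rbar / (1 - γ) with hx
  have hx0 : 0 < x := by positivity
  -- the conditional visit probabilities lie in `[μmin / 2, 1]`
  have hd : ∀ᵐ ω ∂μ, ∀ n p, μmin / 2 ≤ visitProb μ ℱ s a τ p n ω ∧
      visitProb μ ℱ s a τ p n ω ≤ 1 := by
    refine ae_all_iff.2 fun n => ae_all_iff.2 fun p => ?_
    have hv : Measurable[m0] (visit s a p (τ + n)) :=
      measurable_visit ((hsa_meas (τ + n)).mono (ℱ.le _) le_rfl) p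
    have hvi : Integrable (visit s a p (τ + n)) μ :=
      Integrable.of_bound hv.aestronglyMeasurable 1
        (Filter.Eventually.of_forall fun ω => by simp only [visit]; split_ifs <;> simp)
    have hup := condExp_mono (m := ℱ n) hvi (integrable_const (1 : ℝ))
      (Filter.Eventually.of_forall fun ω => by
        simp only [visit]; split_ifs <;> simp)
    have hlow := hexpl p (τ + n) (Nat.le_add_right _ _)
    rw [Nat.add_sub_cancel_left] at hlow
    filter_upwards [hup, hlow] with ω h1 h2
    rw [condExp_const (ℱ.le n)] at h1
    exact ⟨h2, h1⟩
  have hQm := measurable_qlearning ℱ γ s a r hsa_meas hr_meas hs_meas α Q hQ0 hupd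
  set ε := fun p => qNoise μ ℱ γ P R s a r Q τ p with hεdef
  have hεm : ∀ p n, StronglyMeasurable[ℱ (τ + n + 1)] (ε p n) := fun p n =>
    qNoise_measurable ℱ γ P R s a r hsa_meas hr_meas hs_meas Q hQm τ p n
  have hεo : ∀ p n, ∀ W : Ω → ℝ, StronglyMeasurable[ℱ n] W →
      (∃ C : ℝ, ∀ᵐ ω ∂μ, |W ω| ≤ C) → ∫ ω, W ω * ε p n ω ∂μ = 0 := fun p n W hW hWb =>
    qNoise_orthogonal ℱ γ P R s a r x rbar hsa_meas hr_meas hs_meas hr_mean hs_dist hr_bd Q hQm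
      hQb hBb τ p n W hW hWb
  have hεb : ∀ p n, ∀ᵐ ω ∂μ, |ε p n ω| ≤ 4 * x := by
    intro p n
    filter_upwards [hr_all, hQb, hBb, hd] with ω h1 h2 h3 h4
    obtain ⟨hd1, hd2⟩ := h4 n p
    have ht := abs_target_le hγ0 hγ1 (h1 (τ + n))
      (fun a' => Q (τ + n) ω (s (τ + n + 1) ω, a')) fun a' => h2 _ _
    have hA : |visit s a p (τ + n) ω - visitProb μ ℱ s a τ p n ω| ≤ 1 := by
      simp only [visit]
      split_ifs <;> rw [abs_le] <;> constructor <;> linarith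
    have hA' : |visit s a p (τ + n) ω| ≤ 1 := by
      simp only [visit]; split_ifs <;> simp
    have hB : |bellman γ P R (Q n ω) p - Q n ω p| ≤ 2 * x :=
      (abs_sub _ _).trans (by linarith [h3 n p, h2 n p])
    have hB' : |r (τ + n) ω + γ * (⨆ a' : A, Q (τ + n) ω (s (τ + n + 1) ω, a'))
        - bellman γ P R (Q (τ + n) ω) p| ≤ 2 * x :=
      (abs_sub _ _).trans (by linarith [h3 (τ + n) p])
    simp only [hεdef, qNoise]
    refine (abs_add_le _ _).trans ?_
    rw [abs_mul, abs_mul]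
    have i1 := mul_le_mul hA hB (abs_nonneg _) zero_le_one
    have i2 := mul_le_mul hA' hB' (abs_nonneg _) zero_le_one
    linarith
  -- the logarithmic factor
  set Z : ℝ := 2 * ((τ : ℝ) + 1) * (T : ℝ) ^ 2 * (Fintype.card S : ℝ) * (Fintype.card A : ℝ) / δ
    with hZ
  set L := Real.log Z with hL
  have hT1 : (1 : ℝ) ≤ T := by exact_mod_cast hτpos.trans hT
  have hS1 : (1 : ℝ) ≤ Fintype.card S := by exact_mod_cast Fintype.card_pos
  have hA1 : (1 : ℝ) ≤ Fintype.card A := by exact_mod_cast Fintype.card_pos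
  have hZ1 : 1 < Z := by
    rw [hZ, lt_div_iff₀ hδ0, one_mul]
    refine hδ1.trans_le ?_
    have h1 : 1 ≤ 2 * ((τ : ℝ) + 1) := by linarith
    have h2 : 1 ≤ 2 * ((τ : ℝ) + 1) * (T : ℝ) ^ 2 :=
      one_le_mul_of_one_le_of_one_le h1 (one_le_pow₀ hT1)
    exact one_le_mul_of_one_le_of_one_le (one_le_mul_of_one_le_of_one_le h2 hS1) hA1
  have hLpos : 0 < L := Real.log_pos hZ1
  have hexpL : Real.exp (-L) = Z⁻¹ := by rw [Real.exp_neg, hL, Real.exp_log (by linarith)]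
  set ρ : ℕ → ℝ := fun n => 1 - h / ((τ : ℝ) + t0 + n) * (μmin / 2) with hρ
  set cf : ℕ → ℝ := fun n => h / ((τ : ℝ) + t0 + n) with hcf
  -- variance proxy of the accumulated noise at time `τ + n`
  set B : ℕ → ℝ := fun n => (4 * x) ^ 2 * (h / (μmin / 2)) / ((τ : ℝ) + t0 + n) with hB
  have hs0 : ∀ n : ℕ, 0 < (τ : ℝ) + t0 + n := fun n => by
    have : (0 : ℝ) ≤ n := Nat.cast_nonneg n
    linarith
  have hBpos : ∀ n, 0 < B n := fun n => by
    have := hs0 n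
    simp only [hB]; positivity
  obtain ⟨bad, hbad, hbad_compl⟩ := noise_uniform_bound (μ := μ) ℱ τ ρ cf (4 * x) ε hεm hεb hεo
    B hBpos (sum_varClass_le τ (μmin / 2) h ((τ : ℝ) + t0) (4 * x) (by positivity)
      (by linarith) (by nlinarith) (by linarith)) L hLpos T
  have hbadμ : μ bad ≤ ENNReal.ofReal δ := by
    refine hbad.trans (ENNReal.ofReal_le_ofReal ?_)
    rw [hexpL, Fintype.card_prod, hZ, inv_div, mul_div_assoc', div_le_iff₀ (by positivity)]
    push_cast
    -- the union bound needs only one factor `T`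
    have hTT : (T : ℝ) ≤ (T : ℝ) ^ 2 := by nlinarith
    have := mul_le_mul_of_nonneg_left hTT
      (by positivity : 0 ≤ (Fintype.card S : ℝ) * Fintype.card A * ((τ : ℝ) + 1) * 2 * δ)
    linarith
  obtain ⟨N, rfl⟩ := Nat.exists_eq_add_of_le hT
  have hgood : ∀ᵐ ω ∂μ, ω ∉ bad → (⨆ p : S × A, |Q (τ + N) ω p - Qstar p|) ≤
        (60 * rbar / (1 - γ) ^ 2) * Real.sqrt (2 * ((τ : ℝ) + 1) * h / μmin) *
          Real.sqrt (L / (((τ + N : ℕ) : ℝ) + t0)) +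
        (4 * rbar / (1 - γ) ^ 2) *
          max (160 * h * (τ : ℝ) / μmin) (2 * ((τ : ℝ) + t0)) *
            (1 / (((τ + N : ℕ) : ℝ) + t0)) := by
    filter_upwards [hr_all, hd] with ω h1 h2 hω
    refine ciSup_le fun p => ?_
    set G := √(2 * ((τ : ℝ) + 1) * h / μmin) * √L with hG
    have hG0 : 0 ≤ G := by positivity
    have hpath := qlearning_error_path γ hγ0 hγ1 P hP0 hP1 R rbar hR hr0 Qstar hfix'
      (fun t => s t ω) (fun t => a t ω) (fun t => r t ω) h1 μmin hμmin0 τ α hα h t0 hh1 ht04 ht0τ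
      hc hstep (fun t => Q t ω) (hQ0 ω) (fun t p => hupd t ω p)
      (fun n p => visitProb μ ℱ s a τ p n ω) h2 (fun n p => ε p n ω)
      (fun n p => ∑ j ∈ range (τ + 1), noiseClass τ j ρ cf (fun k => ε p k ω) n)
      (fun n p => rfl) (fun p => by simp [noiseClass])
      (fun n p => sum_noiseClass_succ τ ρ cf (fun k => ε p k ω) n)
      N (6 * x * G) (by positivity)
      (by
        intro n hn p
        refine (hbad_compl ω hω p n (by omega)).trans ?_
        have hsn := hs0 n
        refine Real.sqrt_le_iff.2 ⟨by positivity, ?_⟩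
        have hG2 : G ^ 2 = 2 * ((τ : ℝ) + 1) * h / μmin * L := by
          rw [hG, mul_pow, Real.sq_sqrt (by positivity), Real.sq_sqrt hLpos.le]
        rw [div_pow, mul_pow, Real.sq_sqrt hsn.le, hG2]
        -- the Chernoff bound gives the constant `√32`, rounded up to `6`
        have e : 2 * (((τ : ℝ) + 1) * L) * B n =
            32 * (x ^ 2 * (2 * ((τ : ℝ) + 1) * h / μmin * L) / ((τ : ℝ) + t0 + n)) := by
          simp only [hB]; field_simp; ring
        have e' : (6 * x) ^ 2 * (2 * ((τ : ℝ) + 1) * h / μmin * L) / ((τ : ℝ) + t0 + n) =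
            36 * (x ^ 2 * (2 * ((τ : ℝ) + 1) * h / μmin * L) / ((τ : ℝ) + t0 + n)) := by ring
        rw [e, e']
        exact mul_le_mul_of_nonneg_right (by norm_num) (by positivity))
      p
    have hs : ((τ + N : ℕ) : ℝ) + t0 = (τ : ℝ) + t0 + N := by push_cast; ring
    have hsN := hs0 N
    rw [hs, Real.sqrt_div hLpos.le]
    refine hpath.trans (add_le_add ?_ (le_of_eq (by ring)))
    have e1 : 5 * (6 * x * G) / (1 - γ) / √((τ : ℝ) + t0 + N) =
        30 * (rbar / (1 - γ) ^ 2 * (G / √((τ : ℝ) + t0 + N))) := by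
      rw [hx]; field_simp; ring
    have e2 : 60 * rbar / (1 - γ) ^ 2 * √(2 * ((τ : ℝ) + 1) * h / μmin) *
        (√L / √((τ : ℝ) + t0 + N)) =
        60 * (rbar / (1 - γ) ^ 2 * (G / √((τ : ℝ) + t0 + N))) := by
      rw [hG]; ring
    rw [e1, e2]
    exact mul_le_mul_of_nonneg_right (by norm_num) (by positivity)
  set good : Set Ω := {ω | (⨆ p : S × A, |Q (τ + N) ω p - Qstar p|) ≤
        (60 * rbar / (1 - γ) ^ 2) * Real.sqrt (2 * ((τ : ℝ) + 1) * h / μmin) *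
          Real.sqrt (L / (((τ + N : ℕ) : ℝ) + t0)) +
        (4 * rbar / (1 - γ) ^ 2) *
          max (160 * h * (τ : ℝ) / μmin) (2 * ((τ : ℝ) + t0)) *
            (1 / (((τ + N : ℕ) : ℝ) + t0))} with hgoodset
  have hcover : μ Set.univ ≤ μ (good ∪ bad) := by
    refine measure_mono_ae ?_
    filter_upwards [hgood] with ω hω _
    by_cases hb : ω ∈ bad
    · exact Or.inr hb
    · exact Or.inl (hω hb)
  rw [measure_univ] at hcover
  have hfin := hcover.trans ((measure_union_le _ _).trans (add_le_add_right hbadμ _))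
  rw [ENNReal.ofReal_sub _ hδ0.le, ENNReal.ofReal_one]
  exact tsub_le_iff_right.2 hfin
end

section
/- For all integers 0 ≤ k ≤ t: β_{k,t} ≤ (h/(k+t0)) · ((k+1+t0)/(t+1+t0))^{σh}, and β̃_{k,t} ≤ ((k+1+t0)/(t+1+t0))^{σh}. -/
open Finset

/-!
Each factor satisfies `1 - c / x ≤ (x / (x + 1)) ^ c` with `c = σh`, `x = ℓ + t₀`
(`one_sub_div_le_rpow`). The right-hand sides telescope over `ℓ = k + 1, …, t` to
`((k + 1 + t₀) / (t + 1 + t₀)) ^ (σh)`. The factors are nonnegative because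
`σh ≤ h ≤ 4h ≤ t₀`, so the factorwise bounds may be multiplied, by induction on `t`.
The bound on `β` is that on `β̃` times `α k ≥ 0`.
-/

/-- The bound on a single factor, from `1 + y ≤ exp y` with `y = c * log (x / (x + 1))`
and `log u ≥ 1 - u⁻¹` with `u = x / (x + 1)`. -/
lemma one_sub_div_le_rpow {c x : ℝ} (hc : 0 ≤ c) (hx : 0 < x) :
    1 - c / x ≤ (x / (x + 1)) ^ c := by
  have hu : 0 < x / (x + 1) := by positivity
  have hlog := Real.one_sub_inv_le_log_of_pos hu
  have hinv : 1 - (x / (x + 1))⁻¹ = -(1 / x) := by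
    field_simp
    ring
  rw [hinv] at hlog
  rw [Real.rpow_def_of_pos hu]
  have hexp := Real.add_one_le_exp (Real.log (x / (x + 1)) * c)
  have hmul := mul_le_mul_of_nonneg_right hlog hc
  have hdiv : -(1 / x) * c = -(c / x) := by ring
  linarith

/-- **Lemma 3(a).** For step sizes `α_t = h/(t+t₀)` with `h > 2/σ` and `t₀ ≥ max(4h, τ)`,
the quantities `β_{k,t} = α_k ∏_{ℓ=k+1}^t (1-σα_ℓ)` and `β̃_{k,t} = ∏_{ℓ=k+1}^t (1-σα_ℓ)`
satisfy `β_{k,t} ≤ (h/(k+t₀))·((k+1+t₀)/(t+1+t₀))^{σh}` and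
`β̃_{k,t} ≤ ((k+1+t₀)/(t+1+t₀))^{σh}` for all `0 ≤ k ≤ t`. -/
theorem stepsize_beta_bounds
    (sg : ℝ) (hsg0 : 0 < sg) (hsg1 : sg < 1)
    (τ : ℕ) (hτ : 0 < τ)
    (h t0 : ℝ) (hh : 2 / sg < h) (ht0 : max (4 * h) (τ : ℝ) ≤ t0)
    (α : ℕ → ℝ) (hα : ∀ t, α t = h / ((t : ℝ) + t0)) :
    ∀ k t : ℕ, k ≤ t →
      (α k * ∏ ℓ ∈ Finset.Icc (k + 1) t, (1 - sg * α ℓ) ≤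
        (h / ((k : ℝ) + t0)) * (((k : ℝ) + 1 + t0) / ((t : ℝ) + 1 + t0)) ^ (sg * h)) ∧
      (∏ ℓ ∈ Finset.Icc (k + 1) t, (1 - sg * α ℓ) ≤
        (((k : ℝ) + 1 + t0) / ((t : ℝ) + 1 + t0)) ^ (sg * h)) := by
  have hh0 : 0 < h := lt_trans (by positivity) hh
  have h4 : 4 * h ≤ t0 := (le_max_left _ _).trans ht0
  have ht0pos : 0 < t0 := by linarith
  have hc : sg * h ≤ h := by nlinarith
  have hc0 : 0 ≤ sg * h := by positivity
  have key : ∀ k t : ℕ, k ≤ t → ∏ ℓ ∈ Finset.Icc (k + 1) t, (1 - sg * α ℓ) ≤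
      (((k : ℝ) + 1 + t0) / ((t : ℝ) + 1 + t0)) ^ (sg * h) := by
    intro k t hkt
    induction t, hkt using Nat.le_induction with
    | base =>
      have hk : (k : ℝ) + 1 + t0 ≠ 0 := by positivity
      simp [div_self hk]
    | succ t hkt ih =>
      rw [Finset.prod_Icc_succ_top (by omega), hα]
      push_cast
      have hx : 0 < (t : ℝ) + 1 + t0 := by positivity
      have hfac := one_sub_div_le_rpow hc0 hx
      have hnonneg : 0 ≤ 1 - sg * h / ((t : ℝ) + 1 + t0) := by
        rw [sub_nonneg, div_le_one hx]
        have : (0 : ℝ) ≤ t := t.cast_nonneg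
        linarith
      rw [← mul_div_assoc]
      refine (mul_le_mul ih hfac hnonneg (by positivity)).trans_eq ?_
      rw [← Real.mul_rpow (by positivity) (by positivity)]
      congr 1
      field_simp
      ring
  intro k t hkt
  refine ⟨?_, key k t hkt⟩
  rw [hα k]
  exact mul_le_mul_of_nonneg_left (key k t hkt) (by positivity)
end

section
/- For every integer t ≥ 1: Σ_{k=1}^{t} β_{k,t}² ≤ (2h/σ) · 1/(t+1+t0). -/
/-!
Write `S t` for the sum. It satisfies the recursion `S (t+1) = (1 - σ α_{t+1})² S t + α_{t+1}²` with
`S 0 = 0`, and the bound follows by induction on `t`. With `u = t + 1 + t₀`, `s = σ h > 2` and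
`C = 2h/σ`, so that `h² = C s / 2`, the induction step is the scalar inequality
`(1 - s/u)² C/u + C s / (2u²) ≤ C/(u+1)` of `beta_sq_step`. Since `s/u ≤ 1/4`, its left side is at most
`C/u - (5/4) s C/u²`, which is below `C/u - C/u² ≤ C/(u+1)`.
-/

open Finset

lemma beta_sq_step {C s u : ℝ} (hC : 0 < C) (hs : 2 < s) (hu : 4 * s ≤ u) :
    (1 - s / u) ^ 2 * (C * (1 / u)) + C * s / 2 / u ^ 2 ≤ C * (1 / (u + 1)) := by
  have hu0 : 0 < u := by linarith
  have ha : s / u ≤ 1 / 4 := by rw [div_le_iff₀ hu0]; linarith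
  have ha0 : 0 < s / u := by positivity
  have h1 : (1 - s / u) ^ 2 ≤ 1 - 7 / 4 * (s / u) := by nlinarith
  have h2 : 1 / u - 1 / u ^ 2 ≤ 1 / (u + 1) := by
    rw [div_sub_div _ _ hu0.ne' (by positivity), div_le_div_iff₀ (by positivity) (by positivity)]
    nlinarith
  calc (1 - s / u) ^ 2 * (C * (1 / u)) + C * s / 2 / u ^ 2
      ≤ (1 - 7 / 4 * (s / u)) * (C * (1 / u)) + C * s / 2 / u ^ 2 := by gcongr
    _ = C * (1 / u - 5 / 4 * s * (1 / u ^ 2)) := by field_simp; ring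
    _ ≤ C * (1 / u - 1 / u ^ 2) := by
        have : 0 < 1 / u ^ 2 := by positivity
        gcongr
        nlinarith
    _ ≤ C * (1 / (u + 1)) := by gcongr

lemma beta_sq_sum_succ (α : ℕ → ℝ) (sg : ℝ) (t : ℕ) :
    ∑ k ∈ Finset.Icc 1 (t + 1), (α k * ∏ ℓ ∈ Finset.Icc (k + 1) (t + 1), (1 - sg * α ℓ)) ^ 2 =
      (1 - sg * α (t + 1)) ^ 2 *
        ∑ k ∈ Finset.Icc 1 t, (α k * ∏ ℓ ∈ Finset.Icc (k + 1) t, (1 - sg * α ℓ)) ^ 2 +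
      α (t + 1) ^ 2 := by
  rw [Finset.sum_Icc_succ_top (by omega), Finset.mul_sum]
  congr 1
  · refine Finset.sum_congr rfl fun k hk => ?_
    have := (Finset.mem_Icc.mp hk).2
    rw [Finset.prod_Icc_succ_top (by omega)]
    ring
  · simp

/-- **Lemma 3(b).** For step sizes `α_t = h/(t+t₀)` with `h > 2/σ` and `t₀ ≥ max(4h, τ)`,
the quantities `β_{k,t} = α_k ∏_{ℓ=k+1}^t (1-σα_ℓ)` satisfy
`Σ_{k=1}^t β_{k,t}² ≤ (2h/σ)·1/(t+1+t₀)` for every `t ≥ 1`. -/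
theorem stepsize_beta_sq_sum_bound
    (sg : ℝ) (hsg0 : 0 < sg) (hsg1 : sg < 1)
    (τ : ℕ) (hτ : 0 < τ)
    (h t0 : ℝ) (hh : 2 / sg < h) (ht0 : max (4 * h) (τ : ℝ) ≤ t0)
    (α : ℕ → ℝ) (hα : ∀ t, α t = h / ((t : ℝ) + t0)) :
    ∀ t : ℕ, 1 ≤ t →
      ∑ k ∈ Finset.Icc 1 t, (α k * ∏ ℓ ∈ Finset.Icc (k + 1) t, (1 - sg * α ℓ)) ^ 2 ≤
        (2 * h / sg) * (1 / ((t : ℝ) + 1 + t0)) := by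
  have hh0 : 0 < h := lt_trans (by positivity) hh
  have hs : 2 < sg * h := by rwa [div_lt_iff₀' hsg0] at hh
  have ht4 : 4 * h ≤ t0 := (le_max_left _ _).trans ht0
  have hC : 0 < 2 * h / sg := by positivity
  intro t _
  induction t with
  | zero => omega
  | succ t ih =>
    -- The bound also holds for the empty sum at `t = 0`, which starts the induction.
    have ih' : ∑ k ∈ Finset.Icc 1 t, (α k * ∏ ℓ ∈ Finset.Icc (k + 1) t, (1 - sg * α ℓ)) ^ 2 ≤
        (2 * h / sg) * (1 / ((t : ℝ) + 1 + t0)) := by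
      rcases Nat.eq_zero_or_pos t with rfl | hpos
      · have : 0 < ((0 : ℕ) : ℝ) + 1 + t0 := by push_cast; linarith
        simp only [zero_lt_one, Finset.Icc_eq_empty_of_lt, Finset.sum_empty]
        positivity
      · exact ih hpos
    have htn : (0 : ℝ) ≤ t := t.cast_nonneg
    have hu : 4 * (sg * h) ≤ (t : ℝ) + 1 + t0 := by nlinarith
    have hu0 : 0 < (t : ℝ) + 1 + t0 := by linarith
    have hstep := beta_sq_step hC hs hu
    rw [beta_sq_sum_succ, hα (t + 1)]
    push_cast
    calc _ ≤ (1 - sg * (h / ((t : ℝ) + 1 + t0))) ^ 2 *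
            ((2 * h / sg) * (1 / ((t : ℝ) + 1 + t0))) + (h / ((t : ℝ) + 1 + t0)) ^ 2 := by
          gcongr
      _ = (1 - sg * h / ((t : ℝ) + 1 + t0)) ^ 2 *
            ((2 * h / sg) * (1 / ((t : ℝ) + 1 + t0))) +
            2 * h / sg * (sg * h) / 2 / ((t : ℝ) + 1 + t0) ^ 2 := by
          rw [mul_div_assoc sg h, div_pow,
            show 2 * h / sg * (sg * h) / 2 = h ^ 2 by field_simp]
      _ ≤ _ := by
          refine hstep.trans_eq ?_
          ring_nf
end

section
/- For every integer t ≥ τ: Σ_{k=τ}^{t} β_{k,t} · Σ_{ℓ=k−τ+1}^{k} α_{ℓ−1} ≤ (8hτ/σ) · 1/(t+1+t0). -/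
open Finset

/-!
With `x = k + t₀`, the inner sum has `τ` terms, each at most `h / (x - τ) ≤ 2h / x` because
`x ≥ 2τ`; so it is at most `2τh / x` (`inner_sum_le`). The outer sum `S t` satisfies the recursion
`S (t+1) = (1 - σ α_{t+1}) S t + α_{t+1} c_{t+1}` with `c` the inner sum, and the bound
`S t ≤ (8hτ/σ) / (t+1+t₀)` is preserved by it since `hσ > 2` makes the contraction `σh/x`
dominate both the drift `1/x - 1/(x+1)` and the new term (`step_bound`).
-/

/-- The inner sum over a window of length `τ`; `τ ≤ k` and `τ ≤ t₀` give
`j + t₀ ≥ (k + t₀) / 2` on the window. -/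
lemma inner_sum_le (τ k : ℕ) (h t0 : ℝ) (hh : 0 < h) (ht : (τ : ℝ) ≤ t0) (hτ : 0 < τ)
    (hk : τ ≤ k) (α : ℕ → ℝ) (hα : ∀ t, α t = h / ((t : ℝ) + t0)) :
    ∑ ℓ ∈ Finset.Icc (k - τ + 1) k, α (ℓ - 1) ≤ 2 * τ * h / ((k : ℝ) + t0) := by
  have hτ' : (0 : ℝ) < τ := by exact_mod_cast hτ
  have hk' : (τ : ℝ) ≤ k := by exact_mod_cast hk
  have key : ∀ ℓ ∈ Finset.Icc (k - τ + 1) k, α (ℓ - 1) ≤ 2 * h / ((k : ℝ) + t0) := by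
    intro ℓ hℓ
    rw [Finset.mem_Icc] at hℓ
    have h1 : k ≤ (ℓ - 1) + τ := by omega
    have h2 : (k : ℝ) ≤ ((ℓ - 1 : ℕ) : ℝ) + τ := by exact_mod_cast h1
    rw [hα, div_le_div_iff₀ (by linarith) (by linarith)]
    nlinarith
  have hs := Finset.sum_le_card_nsmul _ _ _ key
  have hc : (Finset.Icc (k - τ + 1) k).card = τ := by
    rw [Nat.card_Icc]; omega
  rw [hc, nsmul_eq_mul] at hs
  calc _ ≤ _ := hs
    _ = _ := by ring

/-- One step of the recursion, with `x = t + 1 + t₀`. -/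
lemma step_bound (sg h x T : ℝ) (hsg : 0 < sg) (hh : 2 < h * sg) (hh0 : 0 < h) (hx : 0 < x)
    (hT : 0 < T) :
    (1 - sg * (h / x)) * ((8 * h * T / sg) * (1 / x)) + h / x * (2 * T * h / x) ≤
      (8 * h * T / sg) * (1 / (x + 1)) := by
  have e : (8 * h * T / sg) * (1 / (x + 1)) -
      ((1 - sg * (h / x)) * ((8 * h * T / sg) * (1 / x)) + h / x * (2 * T * h / x)) =
      2 * h * T * (3 * (h * sg) * (x + 1) - 4 * x) / (sg * x ^ 2 * (x + 1)) := by
    field_simp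
    ring
  have : 0 ≤ 2 * h * T * (3 * (h * sg) * (x + 1) - 4 * x) / (sg * x ^ 2 * (x + 1)) := by
    have : 0 ≤ 3 * (h * sg) * (x + 1) - 4 * x := by nlinarith
    positivity
  linarith

/-- **Lemma 3(c).** For step sizes `α_t = h/(t+t₀)` with `h > 2/σ` and `t₀ ≥ max(4h, τ)`,
the quantities `β_{k,t} = α_k ∏_{ℓ=k+1}^t (1-σα_ℓ)` satisfy
`Σ_{k=τ}^t β_{k,t} Σ_{ℓ=k-τ+1}^{k} α_{ℓ-1} ≤ (8hτ/σ)·1/(t+1+t₀)` for every `t ≥ τ`. -/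
theorem stepsize_beta_alpha_sum_bound
    (sg : ℝ) (hsg0 : 0 < sg) (hsg1 : sg < 1)
    (τ : ℕ) (hτ : 0 < τ)
    (h t0 : ℝ) (hh : 2 / sg < h) (ht0 : max (4 * h) (τ : ℝ) ≤ t0)
    (α : ℕ → ℝ) (hα : ∀ t, α t = h / ((t : ℝ) + t0)) :
    ∀ t : ℕ, τ ≤ t →
      ∑ k ∈ Finset.Icc τ t, (α k * ∏ ℓ ∈ Finset.Icc (k + 1) t, (1 - sg * α ℓ)) *
          ∑ ℓ ∈ Finset.Icc (k - τ + 1) k, α (ℓ - 1) ≤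
        (8 * h * (τ : ℝ) / sg) * (1 / ((t : ℝ) + 1 + t0)) := by
  have hhs : 2 < h * sg := (div_lt_iff₀ hsg0).1 hh
  have hh0 : 0 < h := lt_trans (by positivity) hh
  have h4 : 4 * h ≤ t0 := (le_max_left _ _).trans ht0
  have hτt : (τ : ℝ) ≤ t0 := (le_max_right _ _).trans ht0
  have hτ' : (0 : ℝ) < τ := by exact_mod_cast hτ
  have hpos : ∀ n : ℕ, 0 < (n : ℝ) + t0 := fun n => by
    have : (0 : ℝ) ≤ n := n.cast_nonneg
    linarith
  have hα0 : ∀ n, 0 ≤ α n := fun n => by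
    rw [hα]; exact div_nonneg hh0.le (hpos n).le
  have hα1 : ∀ n, 0 ≤ 1 - sg * α n := fun n => by
    have : α n ≤ 1 := by
      rw [hα, div_le_one (hpos n)]
      have : (0 : ℝ) ≤ n := n.cast_nonneg
      linarith
    nlinarith [hα0 n]
  have inner := fun k hk => inner_sum_le τ k h t0 hh0 hτt hτ hk α hα
  -- The recursion step; it covers the base case too, with `S = 0`.
  have step : ∀ (n : ℕ) (S : ℝ), τ ≤ n → S ≤ (8 * h * (τ : ℝ) / sg) * (1 / ((n : ℝ) + t0)) →
      (1 - sg * α n) * S + α n * ∑ ℓ ∈ Finset.Icc (n - τ + 1) n, α (ℓ - 1) ≤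
        (8 * h * (τ : ℝ) / sg) * (1 / ((n : ℝ) + 1 + t0)) := by
    intro n S hn hS
    have hb := step_bound sg h ((n : ℝ) + t0) τ hsg0 hhs hh0 (hpos n) hτ'
    rw [← hα n, add_right_comm] at hb
    exact (add_le_add (mul_le_mul_of_nonneg_left hS (hα1 n))
      (mul_le_mul_of_nonneg_left (inner n hn) (hα0 n))).trans hb
  intro t ht
  induction t, ht using Nat.le_induction with
  | base =>
    have := step τ 0 le_rfl (by have := hpos τ; positivity)
    simpa using this
  | succ t ht ih =>
    have := step (t + 1) _ (by omega) (by push_cast; exact ih)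
    refine le_trans (le_of_eq ?_) this
    rw [Finset.sum_Icc_succ_top (by omega)]
    congr 1
    · rw [Finset.mul_sum]
      refine Finset.sum_congr rfl fun k hk => ?_
      rw [Finset.mem_Icc] at hk
      rw [Finset.prod_Icc_succ_top (by omega)]
      ring
    · simp
end
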